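/- arXiv:1904.05147 — 2 statements merged into one kernel-verified Lean document; each statement's English description precedes it below -/
import Mathlib

section
/- Comparison with planes (Lemma 4.1): let ν ∈ ℝⁿ, b ∈ ℝ, δ > 0, and let F : Γ_ε → ℝ be a bounded Borel function with |F(x) − ν·x − b| ≤ δ for all x ∈ Γ_ε. If u is a bounded Borel function on Ω_ε satisfying the DPP at every point of Ω with u = F on Γ_ε, then for every x ∈ Ω_ε: ν·x − δ + b ≤ u(x) ≤ ν·x + δ + b. -/
open MeasureTheory Metric Set
open scoped RealInnerProductSpace

/-- A point of the open `ε`-ball around a point of `Ω` that is outside `Ω` lies within `ε` of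
the boundary of `Ω`. -/
lemma infDist_frontier_le_of_mem_ball {E : Type*} [NormedAddCommGroup E] [NormedSpace ℝ E]
    {Ω : Set E} {ε : ℝ} {x y : E} (hx : x ∈ Ω) (hy : y ∈ ball x ε) (hyΩ : y ∉ Ω) :
    infDist y (frontier Ω) ≤ ε := by
  have hseg : (segment ℝ y x ∩ frontier Ω).Nonempty := by
    by_contra! hempty
    have hcover : segment ℝ y x ⊆ interior Ω ∪ interior Ωᶜ := by
      rw [← compl_frontier_eq_union_interior]
      exact (disjoint_iff_inter_eq_empty.2 hempty).subset_compl_right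
    obtain ⟨z, -, hz, hz'⟩ := (convex_segment y x).isPreconnected _ _ isOpen_interior
      isOpen_interior hcover
      ⟨x, right_mem_segment ℝ y x, (hcover (right_mem_segment ℝ y x)).resolve_right
        fun h => interior_subset h hx⟩
      ⟨y, left_mem_segment ℝ y x, (hcover (left_mem_segment ℝ y x)).resolve_left
        fun h => hyΩ (interior_subset h)⟩
    exact interior_subset hz' (interior_subset hz)
  obtain ⟨z, hz, hzf⟩ := hseg
  have hdist : dist y z ≤ dist y x := by
    have := dist_add_dist_of_mem_segment hz
    linarith [dist_nonneg (x := z) (y := x)]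
  exact (infDist_le_dist_of_mem hzf).trans (hdist.trans (mem_ball.1 hy).le)

section Average

variable {E : Type*} [NormedAddCommGroup E] [MeasurableSpace E] [BorelSpace E]

/-- A bounded measurable function is integrable on a set of finite measure. -/
lemma integrableOn_of_forall_abs_le {X : Type*} [MeasurableSpace X] {μ : Measure X}
    {f : X → ℝ} {s : Set X} {C : ℝ} (hf : Measurable f) (hs : MeasurableSet s)
    (hμ : μ s ≠ ⊤) (hC : ∀ x ∈ s, |f x| ≤ C) : IntegrableOn f s μ :=
  IntegrableOn.of_bound hμ.lt_top hf.aestronglyMeasurable C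
    ((ae_restrict_iff' hs).2 (.of_forall fun x hx => by simpa using hC x hx))

variable [InnerProductSpace ℝ E] [FiniteDimensional ℝ E]

/-- Linear functions have the mean value property on balls. -/
lemma setAverage_inner_ball (μ : Measure E) [μ.IsAddHaarMeasure] (ν x : E) {ε : ℝ} (hε : 0 < ε) :
    ⨍ z in ball x ε, ⟪ν, z⟫ ∂μ = ⟪ν, x⟫ := by
  have hpos : μ.real (ball x ε) ≠ 0 :=
    (ENNReal.toReal_pos (measure_ball_pos μ x hε).ne' measure_ball_lt_top.ne).ne'
  have hmp : MeasurePreserving (fun z : E => (x + x) - z) μ μ :=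
    Measure.measurePreserving_sub_left μ (x + x)
  have hemb : MeasurableEmbedding (fun z : E => (x + x) - z) :=
    (MeasurableEquiv.subLeft (x + x)).measurableEmbedding
  have hrefl := hmp.setIntegral_preimage_emb hemb (fun z => ⟪ν, z⟫) (ball x ε)
  have hpre : (fun z : E => (x + x) - z) ⁻¹' ball x ε = ball x ε := by
    ext z
    simp only [mem_preimage, mem_ball, dist_eq_norm]
    rw [show x + x - z - x = -(z - x) by abel, norm_neg]
  have hconst : IntegrableOn (fun _ => ⟪ν, x + x⟫) (ball x ε) μ :=
    integrableOn_const measure_ball_lt_top.ne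
  have hint : IntegrableOn (fun z => ⟪ν, z⟫) (ball x ε) μ :=
    ((continuous_const.inner continuous_id).continuousOn.integrableOn_compact
      (isCompact_closedBall x ε)).mono_set ball_subset_closedBall
  rw [hpre] at hrefl
  simp only [inner_sub_right] at hrefl
  rw [integral_sub hconst hint, setIntegral_const,
    inner_add_right, smul_eq_mul] at hrefl
  rw [setAverage_eq, smul_eq_mul, inv_mul_eq_div, div_eq_iff hpos]
  linarith

end Average

/-- If `u` lies below the plane `⟪ν, ·⟫ + c` on `ball x ε`, then the averaged midrange of `u`
over the concentric balls lies below the value of the plane at the centre. -/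
lemma integral_sSup_add_sInf_le {E : Type*} [NormedAddCommGroup E] [InnerProductSpace ℝ E]
    {u : E → ℝ} {x ν : E} {ε c C : ℝ} (hε : 0 < ε) (hC : ∀ y ∈ ball x ε, |u y| ≤ C)
    (hle : ∀ y ∈ ball x ε, u y ≤ ⟪ν, y⟫ + c) :
    ∫ t in (0 : ℝ)..ε, (sSup (u '' ball x t) + sInf (u '' ball x t))
      ≤ 2 * ε * (⟪ν, x⟫ + c) := by
  have hsub : ∀ t ∈ Ioc 0 ε, ball x t ⊆ ball x ε := fun t ht => ball_subset_ball ht.2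
  have hne : ∀ t ∈ Ioc 0 ε, (u '' ball x t).Nonempty := fun t ht =>
    ⟨u x, mem_image_of_mem u (mem_ball_self ht.1)⟩
  have hba : ∀ t ∈ Ioc 0 ε, BddAbove (u '' ball x t) := by
    rintro t ht
    refine ⟨C, ?_⟩
    rintro _ ⟨y, hy, rfl⟩
    exact (abs_le.1 (hC y (hsub t ht hy))).2
  have hbb : ∀ t ∈ Ioc 0 ε, BddBelow (u '' ball x t) := by
    rintro t ht
    refine ⟨-C, ?_⟩
    rintro _ ⟨y, hy, rfl⟩
    exact (abs_le.1 (hC y (hsub t ht hy))).1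
  have hsup : MonotoneOn (fun t => sSup (u '' ball x t)) (Ioc 0 ε) := fun s hs t ht hst =>
    csSup_le_csSup (hba t ht) (hne s hs) (image_mono (ball_subset_ball hst))
  have hinf : AntitoneOn (fun t => sInf (u '' ball x t)) (Ioc 0 ε) := fun s hs t ht hst =>
    csInf_le_csInf (hbb t ht) (hne s hs) (image_mono (ball_subset_ball hst))
  have hbound : ∀ t ∈ Ioc 0 ε,
      |sSup (u '' ball x t)| ≤ C ∧ |sInf (u '' ball x t)| ≤ C := by
    intro t ht
    have hx := abs_le.1 (hC x (mem_ball_self hε))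
    have hxt : u x ∈ u '' ball x t := mem_image_of_mem u (mem_ball_self ht.1)
    have h1 := le_csSup (hba t ht) hxt
    have h2 := csInf_le (hbb t ht) hxt
    have h3 : sSup (u '' ball x t) ≤ C := csSup_le (hne t ht) (by
      rintro _ ⟨y, hy, rfl⟩
      exact (abs_le.1 (hC y (hsub t ht hy))).2)
    have h4 : -C ≤ sInf (u '' ball x t) := le_csInf (hne t ht) (by
      rintro _ ⟨y, hy, rfl⟩
      exact (abs_le.1 (hC y (hsub t ht hy))).1)
    exact ⟨abs_le.2 ⟨by linarith, h3⟩, abs_le.2 ⟨h4, by linarith⟩⟩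
  have hint : IntegrableOn (fun t => sSup (u '' ball x t) + sInf (u '' ball x t))
      (Ioc 0 ε) := by
    refine IntegrableOn.of_bound measure_Ioc_lt_top
      ((aemeasurable_restrict_of_monotoneOn measurableSet_Ioc hsup).add
        (aemeasurable_restrict_of_antitoneOn measurableSet_Ioc hinf)).aestronglyMeasurable
      (C + C) ?_
    refine (ae_restrict_iff' measurableSet_Ioc).2 (.of_forall fun t ht => ?_)
    exact (norm_add_le _ _).trans (add_le_add (hbound t ht).1 (hbound t ht).2)
  have hpt : ∀ t ∈ Ioc 0 ε,
      sSup (u '' ball x t) + sInf (u '' ball x t) ≤ 2 * (⟪ν, x⟫ + c) := by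
    intro t ht
    rw [← le_sub_iff_add_le]
    refine csSup_le (hne t ht) ?_
    rintro _ ⟨y, hy, rfl⟩
    have hy' : x + x - y ∈ ball x t := by
      rw [mem_ball, dist_eq_norm, show x + x - y - x = -(y - x) by abel, norm_neg, ← dist_eq_norm]
      exact hy
    have h1 := csInf_le (hbb t ht) (mem_image_of_mem u hy')
    have h2 := hle y (hsub t ht hy)
    have h3 := hle _ (hsub t ht hy')
    rw [inner_sub_right, inner_add_right] at h3
    linarith
  rw [intervalIntegral.integral_of_le hε.le]
  refine (setIntegral_mono_on hint (integrableOn_const measure_Ioc_lt_top.ne)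
    measurableSet_Ioc hpt).trans (le_of_eq ?_)
  rw [setIntegral_const, Measure.real, Real.volume_Ioc, sub_zero, ENNReal.toReal_ofReal hε.le,
    smul_eq_mul]
  ring

section Euclidean

variable {n : ℕ}

/-- A nonnegative function on a ball that is at least `s` on a sub-ball of a quarter of the
radius has average at least `s / 4 ^ n`. -/
lemma div_le_setAverage_ball {m : EuclideanSpace ℝ (Fin n) → ℝ}
    {x y : EuclideanSpace ℝ (Fin n)} {ε s : ℝ} (hε : 0 < ε)
    (hsub : ball y (ε / 4) ⊆ ball x ε) (hint : IntegrableOn m (ball x ε))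
    (hnonneg : ∀ z ∈ ball x ε, 0 ≤ m z) (hs : ∀ z ∈ ball y (ε / 4), s ≤ m z) :
    s / 4 ^ n ≤ ⨍ z in ball x ε, m z := by
  have hpos : 0 < volume.real (ball x ε) :=
    ENNReal.toReal_pos (measure_ball_pos volume x hε).ne' measure_ball_lt_top.ne
  have hvol : volume.real (ball x ε) = 4 ^ n * volume.real (ball y (ε / 4)) := by
    rw [Measure.real, Measure.real, Measure.addHaar_ball_of_pos volume x hε,
      Measure.addHaar_ball_of_pos volume y (by positivity), ENNReal.toReal_mul, ENNReal.toReal_mul,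
      ENNReal.toReal_ofReal (by positivity), ENNReal.toReal_ofReal (by positivity),
      finrank_euclideanSpace_fin, div_pow]
    field_simp
  have h1 : s * volume.real (ball y (ε / 4)) ≤ ∫ z in ball y (ε / 4), m z :=
    setIntegral_ge_of_const_le_real measurableSet_ball measure_ball_lt_top.ne hs
      (hint.mono_set hsub)
  have h2 : ∫ z in ball y (ε / 4), m z ≤ ∫ z in ball x ε, m z :=
    setIntegral_mono_set hint
      ((ae_restrict_iff' measurableSet_ball).2 (.of_forall hnonneg)) hsub.eventuallyLE
  rw [setAverage_eq, smul_eq_mul, inv_mul_eq_div, le_div_iff₀ hpos, hvol]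
  refine le_trans (le_of_eq ?_) (h1.trans h2)
  field_simp

/-- Strong minimum principle: a nonnegative function dominating `β` times its averages over
`ε`-balls in a bounded set, and bounded below by a positive constant on the boundary strip,
is bounded below by a positive constant. -/
lemma exists_pos_le_of_mul_setAverage_le (hn : 0 < n) {Ω Γ : Set (EuclideanSpace ℝ (Fin n))}
    (hΩ : Bornology.IsBounded Ω) {ε β c C : ℝ} (hε : 0 < ε) (hβ : 0 < β) (hβ1 : β ≤ 1)
    (hc : 0 < c) {m : EuclideanSpace ℝ (Fin n) → ℝ} (hm : Measurable m)
    (hball : ∀ x ∈ Ω, ball x ε ⊆ Ω ∪ Γ) (hnonneg : ∀ x ∈ Ω ∪ Γ, 0 ≤ m x)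
    (hC : ∀ x ∈ Ω ∪ Γ, |m x| ≤ C) (hΓ : ∀ x ∈ Γ, c ≤ m x)
    (hmean : ∀ x ∈ Ω, β * ⨍ z in ball x ε, m z ≤ m x) :
    ∃ κ > 0, ∀ x ∈ Ω ∪ Γ, κ ≤ m x := by
  obtain ⟨R, hR⟩ := hΩ.exists_norm_le
  set i : Fin n := ⟨0, hn⟩
  set q : ℝ := β / 4 ^ n with hq
  have hqpos : 0 < q := by positivity
  have hq1 : q ≤ 1 := (div_le_one (by positivity)).2 (hβ1.trans (one_le_pow₀ (by norm_num)))
  have hcoord : ∀ x : EuclideanSpace ℝ (Fin n), |x i| ≤ ‖x‖ := fun x => by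
    simpa using PiLp.norm_apply_le x i
  have hstep : ∀ k : ℕ, ∀ x ∈ Ω, R - k * (ε / 2) < x i → c * q ^ k ≤ m x := by
    intro k
    induction k with
    | zero =>
      intro x hx hxi
      have := (le_abs_self _).trans ((hcoord x).trans (hR x hx))
      simp only [Nat.cast_zero, zero_mul, sub_zero] at hxi
      linarith
    | succ k ih =>
      intro x hx hxi
      set y : EuclideanSpace ℝ (Fin n) := x + EuclideanSpace.single i (3 * ε / 4) with hy
      have hyx : dist y x = 3 * ε / 4 := by
        rw [dist_eq_norm, hy, add_sub_cancel_left, PiLp.norm_single, Real.norm_eq_abs,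
          abs_of_pos (by positivity)]
      have hsub : ball y (ε / 4) ⊆ ball x ε := ball_subset_ball' (by rw [hyx]; linarith)
      have hlow : ∀ z ∈ ball y (ε / 4), c * q ^ k ≤ m z := by
        intro z hz
        rcases hball x hx (hsub hz) with hzΩ | hzΓ
        · refine ih z hzΩ ?_
          have h1 : |z i - y i| < ε / 4 := by
            have := hcoord (z - y)
            rw [PiLp.sub_apply, ← dist_eq_norm] at this
            exact this.trans_lt hz
          have h2 : y i = x i + 3 * ε / 4 := by simp [hy]
          have h3 := (abs_lt.1 h1).1
          push_cast at hxi
          linarith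
        · exact (mul_le_of_le_one_right hc.le (pow_le_one₀ hqpos.le hq1)).trans (hΓ z hzΓ)
      have hint : IntegrableOn m (ball x ε) :=
        integrableOn_of_forall_abs_le hm measurableSet_ball measure_ball_lt_top.ne
          fun z hz => hC z (hball x hx hz)
      have havg := div_le_setAverage_ball hε hsub hint
        (fun z hz => hnonneg z (hball x hx hz)) hlow
      calc c * q ^ (k + 1) = β * (c * q ^ k / 4 ^ n) := by rw [pow_succ, hq]; ring
        _ ≤ β * ⨍ z in ball x ε, m z := by gcongr
        _ ≤ m x := hmean x hx
  obtain ⟨N, hN⟩ := exists_nat_gt (2 * R / (ε / 2))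
  rw [div_lt_iff₀ (by positivity)] at hN
  refine ⟨c * q ^ N, by positivity, ?_⟩
  rintro x (hx | hx)
  · refine hstep N x hx ?_
    have := (neg_le_abs _).trans ((hcoord x).trans (hR x hx))
    have hR' : R - N * (ε / 2) < -R := by linarith
    linarith
  · exact (mul_le_of_le_one_right hc.le (pow_le_one₀ hqpos.le hq1)).trans (hΓ x hx)

/-- One-sided comparison with planes for subsolutions of the dynamic programming principle. -/
lemma le_plane_of_subsolution (hn : 0 < n) {Ω Γ : Set (EuclideanSpace ℝ (Fin n))}
    (hΩ : Bornology.IsBounded Ω) {ε α β a : ℝ} (hε : 0 < ε) (hα : 0 ≤ α) (hβ : 0 < β)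
    (hαβ : α + β = 1) {ν : EuclideanSpace ℝ (Fin n)} {u : EuclideanSpace ℝ (Fin n) → ℝ}
    (hu : Measurable u) {C : ℝ} (hC : ∀ x ∈ Ω ∪ Γ, |u x| ≤ C)
    (hball : ∀ x ∈ Ω, ball x ε ⊆ Ω ∪ Γ)
    (hΓbdd : Bornology.IsBounded Γ)
    (hdpp : ∀ x ∈ Ω, u x ≤
        α / (2 * ε) * (∫ t in (0 : ℝ)..ε, (sSup (u '' ball x t) + sInf (u '' ball x t)))
          + β * ⨍ z in ball x ε, u z)
    (hΓ : ∀ x ∈ Γ, u x ≤ ⟪ν, x⟫ + a) :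
    ∀ x ∈ Ω ∪ Γ, u x ≤ ⟪ν, x⟫ + a := by
  obtain ⟨R, hR⟩ := (hΩ.union hΓbdd).exists_norm_le
  set w : EuclideanSpace ℝ (Fin n) → ℝ := fun x => u x - ⟪ν, x⟫ with hw
  have hwC : ∀ x ∈ Ω ∪ Γ, |w x| ≤ C + ‖ν‖ * R := fun x hx =>
    (abs_sub _ _).trans (add_le_add (hC x hx)
      ((abs_real_inner_le_norm ν x).trans (by gcongr; exact hR x hx)))
  have hwmeas : Measurable w := hu.sub (continuous_const.inner continuous_id).measurable
  by_contra! hcon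
  obtain ⟨x₀, hx₀, hlt⟩ := hcon
  set M : ℝ := sSup (w '' (Ω ∪ Γ)) with hM
  have hne : (w '' (Ω ∪ Γ)).Nonempty := ⟨w x₀, mem_image_of_mem w hx₀⟩
  have hbdd : BddAbove (w '' (Ω ∪ Γ)) := by
    refine ⟨C + ‖ν‖ * R, ?_⟩
    rintro _ ⟨x, hx, rfl⟩
    exact (abs_le.1 (hwC x hx)).2
  have hleM : ∀ x ∈ Ω ∪ Γ, w x ≤ M := fun x hx => le_csSup hbdd (mem_image_of_mem w hx)
  have haM : a < M := by
    have := hleM x₀ hx₀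
    simp only [hw] at this
    linarith
  have hmean : ∀ x ∈ Ω, β * ⨍ z in ball x ε, (M - w z) ≤ M - w x := by
    intro x hx
    have hpos : volume.real (ball x ε) ≠ 0 :=
      (ENNReal.toReal_pos (measure_ball_pos volume x hε).ne' measure_ball_lt_top.ne).ne'
    have huint : IntegrableOn u (ball x ε) :=
      integrableOn_of_forall_abs_le hu measurableSet_ball measure_ball_lt_top.ne
        fun z hz => hC z (hball x hx hz)
    have hLint : IntegrableOn (fun z => ⟪ν, z⟫) (ball x ε) :=
      ((continuous_const.inner continuous_id).continuousOn.integrableOn_compact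
        (isCompact_closedBall x ε)).mono_set ball_subset_closedBall
    have hconst : IntegrableOn (fun _ => M) (ball x ε) :=
      integrableOn_const measure_ball_lt_top.ne
    have hwint : IntegrableOn (fun z => u z - ⟪ν, z⟫) (ball x ε) := huint.sub hLint
    have havg : ⨍ z in ball x ε, (M - w z) = M - (⨍ z in ball x ε, u z) + ⟪ν, x⟫ := by
      rw [← setAverage_inner_ball volume ν x hε]
      simp only [setAverage_eq, smul_eq_mul, hw]
      rw [integral_sub hconst hwint,
        integral_sub huint hLint, setIntegral_const, smul_eq_mul]
      field_simp
      ring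
    have hmid := integral_sSup_add_sInf_le (u := u) (ν := ν) (c := M) hε
      (fun y hy => hC y (hball x hx hy)) (fun y hy => by
        have := hleM y (hball x hx hy)
        simp only [hw] at this
        linarith)
    have hmid' : α / (2 * ε) *
        (∫ t in (0 : ℝ)..ε, (sSup (u '' ball x t) + sInf (u '' ball x t)))
          ≤ α * (⟪ν, x⟫ + M) := by
      refine (mul_le_mul_of_nonneg_left hmid (by positivity)).trans (le_of_eq ?_)
      field_simp
    have hux := hdpp x hx
    obtain rfl : α = 1 - β := by linarith
    simp only [hw] at havg ⊢
    rw [havg]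
    linarith
  obtain ⟨κ, hκ, hκle⟩ := exists_pos_le_of_mul_setAverage_le (m := fun x => M - w x) hn hΩ hε hβ
    (by linarith) (sub_pos.2 haM) (C := |M| + (C + ‖ν‖ * R)) (measurable_const.sub hwmeas) hball
    (fun x hx => sub_nonneg.2 (hleM x hx))
    (fun x hx => (abs_sub _ _).trans (by gcongr; exact hwC x hx))
    (fun x hx => by
      have := hΓ x hx
      simp only [hw]
      linarith) hmean
  have : M ≤ M - κ := csSup_le hne (by
    rintro _ ⟨x, hx, rfl⟩
    linarith [hκle x hx])
  linarith

end Euclidean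

/-- **Comparison with planes (Lemma 4.1).** Let `|F(x) − ν·x − b| ≤ δ` on `Γ_ε`. If `u` is
a bounded Borel function on `Ω_ε` satisfying the DPP at every point of `Ω` with `u = F` on
`Γ_ε`, then `ν·x − δ + b ≤ u(x) ≤ ν·x + δ + b` for every `x ∈ Ω_ε`. -/
theorem comparison_with_planes (n : ℕ) (hn : 2 ≤ n) (p : ℝ) (hp : 2 < p)
    (Ω : Set (EuclideanSpace ℝ (Fin n)))
    (hΩopen : IsOpen Ω) (hΩconn : IsConnected Ω) (hΩbdd : Bornology.IsBounded Ω)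
    (ε : ℝ) (hε : ε ∈ Set.Ioo (0 : ℝ) 1)
    (ν : EuclideanSpace ℝ (Fin n)) (b δ : ℝ) (hδ : 0 < δ)
    (F u : EuclideanSpace ℝ (Fin n) → ℝ)
    (hFmeas : Measurable F)
    (hFbdd : ∃ M, ∀ x ∈ {x | x ∉ Ω ∧ Metric.infDist x (frontier Ω) ≤ ε}, |F x| ≤ M)
    (hFplane : ∀ x ∈ {x | x ∉ Ω ∧ Metric.infDist x (frontier Ω) ≤ ε}, |F x - ⟪ν, x⟫ - b| ≤ δ)
    (humeas : Measurable u)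
    (hubdd : ∃ M, ∀ x ∈ Ω ∪ {x | x ∉ Ω ∧ Metric.infDist x (frontier Ω) ≤ ε}, |u x| ≤ M)
    (hudpp : ∀ x ∈ Ω, u x =
        ((p - 2) / (n + p)) / (2 * ε) *
            (∫ t in (0 : ℝ)..ε, (sSup (u '' Metric.ball x t) + sInf (u '' Metric.ball x t)))
          + ((n + 2) / (n + p)) * ⨍ z in Metric.ball x ε, u z)
    (hbdry : ∀ x ∈ {x | x ∉ Ω ∧ Metric.infDist x (frontier Ω) ≤ ε}, u x = F x) :
    ∀ x ∈ Ω ∪ {x | x ∉ Ω ∧ Metric.infDist x (frontier Ω) ≤ ε},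
      ⟪ν, x⟫ - δ + b ≤ u x ∧ u x ≤ ⟪ν, x⟫ + δ + b := by
  set Γ : Set (EuclideanSpace ℝ (Fin n)) := {x | x ∉ Ω ∧ infDist x (frontier Ω) ≤ ε} with hΓdef
  have hε0 : 0 < ε := hε.1
  have hn0 : 0 < n := by omega
  have hnp : (0 : ℝ) < n + p := by positivity
  have hα : 0 ≤ (p - 2) / (n + p) := div_nonneg (by linarith) hnp.le
  have hβ : 0 < ((n : ℝ) + 2) / (n + p) := by positivity
  have hαβ : (p - 2) / (n + p) + ((n : ℝ) + 2) / (n + p) = 1 := by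
    field_simp
    ring
  have hball : ∀ x ∈ Ω, ball x ε ⊆ Ω ∪ Γ := fun x hx y hy =>
    or_iff_not_imp_left.2 fun hyΩ => ⟨hyΩ, infDist_frontier_le_of_mem_ball hx hy hyΩ⟩
  have hΓbdd : Bornology.IsBounded Γ := by
    have hfr : (frontier Ω).Nonempty := by
      have : Nonempty (Fin n) := ⟨⟨0, hn0⟩⟩
      refine nonempty_frontier_iff.2 ⟨hΩconn.nonempty, fun h => ?_⟩
      exact NormedSpace.unbounded_univ ℝ (EuclideanSpace ℝ (Fin n)) (h ▸ hΩbdd)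
    refine (hΩbdd.closure.subset frontier_subset_closure).cthickening (δ := ε) |>.subset ?_
    intro x hx
    exact mem_cthickening_iff.2
      ((ENNReal.le_ofReal_iff_toReal_le (infEDist_ne_top hfr) hε0.le).2 hx.2)
  obtain ⟨C, hC⟩ := hubdd
  have hupper := le_plane_of_subsolution (ν := ν) (a := b + δ) hn0 hΩbdd hε0 hα hβ hαβ humeas hC
    hball hΓbdd (fun x hx => (hudpp x hx).le) fun x hx => by
      have := (abs_le.1 (hFplane x hx)).2
      rw [hbdry x hx]
      linarith
  have hlower := le_plane_of_subsolution (ν := -ν) (u := fun x => -u x) (a := -b + δ) (C := C) hn0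
    hΩbdd hε0 hα hβ hαβ humeas.neg (fun x hx => by simpa using hC x hx) hball hΓbdd
    (fun x hx => by
      have himage : ∀ t, (fun y => -u y) '' ball x t = -(u '' ball x t) := fun t => by
        rw [← image_neg_eq_neg, image_image]
      have hint : ∫ t in (0 : ℝ)..ε, (sSup ((fun y => -u y) '' ball x t)
          + sInf ((fun y => -u y) '' ball x t))
          = -∫ t in (0 : ℝ)..ε, (sSup (u '' ball x t) + sInf (u '' ball x t)) := by
        rw [← intervalIntegral.integral_neg]
        congr 1
        ext t
        rw [himage, Real.sInf_def, Real.sInf_def, neg_neg]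
        ring
      have havg : ⨍ z in ball x ε, -u z = -⨍ z in ball x ε, u z := by
        simp only [average_eq, integral_neg, smul_neg]
      rw [hint, havg, hudpp x hx]
      linarith)
    fun x hx => by
      have := (abs_le.1 (hFplane x hx)).1
      rw [hbdry x hx, inner_neg_left]
      linarith
  intro x hx
  have h1 := hupper x hx
  have h2 := hlower x hx
  rw [inner_neg_left] at h2
  exact ⟨by linarith, by linarith⟩
end

section
/- Improved Lipschitz estimate near a plane (Theorem 4.2): for every p > 2, integer n ≥ 2 and r > 0 there exists a constant C > 0 (depending only on p, n and r) such that the following holds. Let ε ∈ (0,1) with ε < r, let ν ∈ ℝⁿ, b ∈ ℝ, δ > 0, and let F : Γ_ε → ℝ be continuous with |F(x) − ν·x − b| ≤ δ on Γ_ε. Let u be a bounded Borel function on Ω_ε satisfying the DPP at every point of Ω with u = F on Γ_ε. Then for every z₀ with B_{6r}(z₀) ⊂ Ω and all x, y ∈ B_r(z₀): |u(x) − u(y)| ≤ (|ν| + Cδ)|x − y| + (5|ν| + Cδ)ε. -/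
open MeasureTheory Metric Set
open scoped RealInnerProductSpace

/-- Points at distance less than `ε` from an open set `Ω` lie in `Ω` or in its outer strip. -/
lemma ball_subset_union_strip {n : ℕ} {Ω : Set (EuclideanSpace ℝ (Fin n))} {ε : ℝ}
    {x : EuclideanSpace ℝ (Fin n)} (hx : x ∈ Ω) :
    ball x ε ⊆ Ω ∪ {y | y ∉ Ω ∧ infDist y (frontier Ω) ≤ ε} := by
  intro y hy
  by_cases hyΩ : y ∈ Ω
  · exact Or.inl hyΩ
  refine Or.inr ⟨hyΩ, ?_⟩
  obtain ⟨w, hw, hwf⟩ : (segment ℝ x y ∩ frontier Ω).Nonempty := by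
    by_contra hne
    have hnf : ∀ w ∈ segment ℝ x y, w ∉ frontier Ω := fun w hw hwf => hne ⟨w, hw, hwf⟩
    have hcov : segment ℝ x y ⊆ interior Ω ∪ (closure Ω)ᶜ := by
      intro w hw
      by_contra hcon
      rw [mem_union, not_or, notMem_compl_iff] at hcon
      exact hnf w hw ⟨hcon.2, hcon.1⟩
    obtain ⟨w, -, hw1, hw2⟩ := (convex_segment (𝕜 := ℝ) x y).isPreconnected _ _ isOpen_interior
      isClosed_closure.isOpen_compl hcov
      ⟨x, left_mem_segment ℝ x y, (hcov (left_mem_segment ℝ x y)).resolve_right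
        (not_not.2 (subset_closure hx))⟩
      ⟨y, right_mem_segment ℝ x y, (hcov (right_mem_segment ℝ x y)).resolve_left
        fun h => hyΩ (interior_subset h)⟩
    exact hw2 (subset_closure (interior_subset hw1))
  have h1 : dist x w + dist w y = dist x y := dist_add_dist_of_mem_segment hw
  have h2 : infDist y (frontier Ω) ≤ dist y w := infDist_le_dist_of_mem hwf
  rw [mem_ball, dist_comm] at hy
  rw [dist_comm] at h2
  linarith [dist_nonneg (x := x) (y := w)]

section Measure

variable {n : ℕ}

lemma volume_real_ball_pos (x : EuclideanSpace ℝ (Fin n)) {ρ : ℝ} (hρ : 0 < ρ) :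
    0 < volume.real (ball x ρ) :=
  ENNReal.toReal_pos (measure_ball_pos volume x hρ).ne' measure_ball_lt_top.ne

lemma volume_real_ball_scale (x y : EuclideanSpace ℝ (Fin n)) {ρ c : ℝ} (hρ : 0 < ρ) (hc : 0 < c) :
    volume.real (ball x (c * ρ)) = c ^ n * volume.real (ball y ρ) := by
  simp only [Measure.real]
  rw [Measure.addHaar_ball_of_pos _ _ (mul_pos hc hρ), Measure.addHaar_ball_of_pos _ _ hρ,
    finrank_euclideanSpace_fin, ENNReal.toReal_mul, ENNReal.toReal_mul,
    ENNReal.toReal_ofReal (by positivity), ENNReal.toReal_ofReal (by positivity), mul_pow, mul_assoc]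

lemma setIntegral_comp_isometry (R : EuclideanSpace ℝ (Fin n) ≃ₗᵢ[ℝ] EuclideanSpace ℝ (Fin n))
    (g : EuclideanSpace ℝ (Fin n) → ℝ) {D : Set (EuclideanSpace ℝ (Fin n))} (hD : R ⁻¹' D = D) :
    ∫ h in D, g (R h) = ∫ h in D, g h := by
  have := R.measurePreserving.setIntegral_preimage_emb
    R.toHomeomorph.measurableEmbedding g D
  rwa [hD] at this

lemma integrableOn_comp_isometry (R : EuclideanSpace ℝ (Fin n) ≃ₗᵢ[ℝ] EuclideanSpace ℝ (Fin n))
    {g : EuclideanSpace ℝ (Fin n) → ℝ} {D : Set (EuclideanSpace ℝ (Fin n))} (hD : R ⁻¹' D = D)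
    (hg : IntegrableOn g D) : IntegrableOn (fun h => g (R h)) D := by
  have := (R.measurePreserving.integrableOn_comp_preimage
    R.toHomeomorph.measurableEmbedding (f := g) (s := D)).2 hg
  rwa [hD] at this

lemma isometry_preimage_ball (R : EuclideanSpace ℝ (Fin n) ≃ₗᵢ[ℝ] EuclideanSpace ℝ (Fin n))
    (ρ : ℝ) : R ⁻¹' ball 0 ρ = ball 0 ρ := by
  ext h; simp

/-- An integral over a symmetric set is controlled by the even part of the integrand. -/
lemma setIntegral_le_of_even_part {D : Set (EuclideanSpace ℝ (Fin n))} (hDm : MeasurableSet D)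
    (hD : ∀ h, -h ∈ D ↔ h ∈ D) {g k : EuclideanSpace ℝ (Fin n) → ℝ} (hg : IntegrableOn g D)
    (hk : IntegrableOn k D) (hle : ∀ h ∈ D, g h + g (-h) ≤ 2 * k h) :
    ∫ h in D, g h ≤ ∫ h in D, k h := by
  have hpre : (LinearIsometryEquiv.neg ℝ : EuclideanSpace ℝ (Fin n) ≃ₗᵢ[ℝ] _) ⁻¹' D = D := by
    ext h; simpa using hD h
  have h1 := setIntegral_comp_isometry (LinearIsometryEquiv.neg ℝ) g hpre
  have h2 := integrableOn_comp_isometry (LinearIsometryEquiv.neg ℝ) hpre hg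
  simp only [LinearIsometryEquiv.coe_neg] at h1 h2
  have h3 : ∫ h in D, (g h + g (-h)) ≤ ∫ h in D, 2 * k h :=
    setIntegral_mono_on (hg.add h2) (hk.const_mul 2) hDm hle
  rw [integral_add hg h2, h1, integral_const_mul] at h3
  linarith

lemma setAverage_ball_eq (u : EuclideanSpace ℝ (Fin n) → ℝ) (x : EuclideanSpace ℝ (Fin n)) (ρ : ℝ) :
    ⨍ z in ball x ρ, u z = (volume.real (ball (0 : EuclideanSpace ℝ (Fin n)) ρ))⁻¹ *
      ∫ h in ball 0 ρ, u (x + h) := by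
  have hpre : (fun h => x + h) ⁻¹' ball x ρ = ball 0 ρ := by
    ext h; simp
  rw [setAverage_eq, smul_eq_mul]
  congr 1
  · simp only [Measure.real, Measure.addHaar_ball_center volume x]
  · rw [← hpre]
    exact ((measurePreserving_add_left volume x).setIntegral_preimage_emb
      (measurableEmbedding_addLeft x) u _).symm

lemma integrableOn_ball_translate {u : EuclideanSpace ℝ (Fin n) → ℝ} (hu : Measurable u)
    {x : EuclideanSpace ℝ (Fin n)} {ρ K : ℝ} (hK : ∀ y ∈ ball x ρ, |u y| ≤ K) :
    IntegrableOn (fun h => u (x + h)) (ball 0 ρ) := by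
  refine Measure.integrableOn_of_bounded measure_ball_lt_top.ne
    (hu.comp (measurable_const_add x)).aestronglyMeasurable (M := K) ?_
  filter_upwards [ae_restrict_mem measurableSet_ball] with h hh
  exact hK _ (by simpa using hh)

/-- Gain of a partially reflected coupling: the points are reflected by `R` if `|h| < ε/2` and
moved in parallel otherwise. -/
lemma integral_sub_le_of_reflection {ε T γ : ℝ} (hε : 0 < ε) (hγ : 0 ≤ γ)
    (R : EuclideanSpace ℝ (Fin n) ≃ₗᵢ[ℝ] EuclideanSpace ℝ (Fin n))
    {e : EuclideanSpace ℝ (Fin n)} (he : ‖e‖ = 1) {a b : EuclideanSpace ℝ (Fin n) → ℝ}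
    (ha : IntegrableOn a (ball 0 ε)) (hb : IntegrableOn b (ball 0 ε))
    (hout : ∀ h ∈ ball 0 ε, a h - b h + (a (-h) - b (-h)) ≤ 2 * T)
    (hin : ∀ h ∈ ball 0 (ε / 2), a h - b (R h) + (a (-h) - b (R (-h))) ≤
      2 * (T - γ * ⟪e, h⟫ ^ 2)) :
    (∫ h in ball 0 ε, a h) - ∫ h in ball 0 ε, b h ≤
      (T - γ * (ε ^ 2 / 64 * (1 / 8) ^ n)) * volume.real (ball (0 : EuclideanSpace ℝ (Fin n)) ε) := by
  have hsub : ball (0 : EuclideanSpace ℝ (Fin n)) (ε / 2) ⊆ ball 0 ε :=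
    ball_subset_ball (by linarith)
  set Din : Set (EuclideanSpace ℝ (Fin n)) := ball 0 (ε / 2)
  set Dout : Set (EuclideanSpace ℝ (Fin n)) := ball 0 ε \ Din
  set B : Set (EuclideanSpace ℝ (Fin n)) := ball ((ε / 4) • e) (1 / 8 * ε) with hB
  have hDm : MeasurableSet Dout := measurableSet_ball.diff measurableSet_ball
  have hBsub : B ⊆ Din := by
    apply ball_subset_ball'
    rw [dist_zero_right, norm_smul, he, Real.norm_of_nonneg (by linarith)]
    linarith
  have hai := ha.mono_set hsub
  have hbi := hb.mono_set hsub
  have hbR := integrableOn_comp_isometry R (isometry_preimage_ball R (ε / 2)) hbi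
  have hao := ha.mono_set (sdiff_subset : Dout ⊆ _)
  have hbo := hb.mono_set (sdiff_subset : Dout ⊆ _)
  have hconst : IntegrableOn (fun _ => γ * (ε ^ 2 / 64)) B (volume.restrict Din) :=
    integrableOn_const
      ((Measure.restrict_apply_le _ _).trans_lt (measure_ball_lt_top (μ := volume))).ne
  have hT0 : Integrable (fun _ => T) (volume.restrict Din) :=
    integrableOn_const measure_ball_lt_top.ne
  have h1 : ∫ h in Din, (a h - b (R h)) ≤
      ∫ h in Din, (T - B.indicator (fun _ => γ * (ε ^ 2 / 64)) h) := by
    refine setIntegral_le_of_even_part measurableSet_ball (by simp) (hai.sub hbR) ?_ ?_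
    · refine hT0.sub ?_
      exact (integrable_indicator_iff measurableSet_ball).2 hconst
    · intro h hh
      refine (hin h hh).trans ?_
      by_cases hhB : h ∈ B
      · rw [indicator_of_mem hhB]
        have h2 : ε / 8 ≤ ⟪e, h⟫ := by
          have h3 : |⟪e, h - (ε / 4) • e⟫| ≤ ‖e‖ * ‖h - (ε / 4) • e‖ := abs_real_inner_le_norm _ _
          rw [hB, mem_ball, dist_eq_norm] at hhB
          rw [inner_sub_right, inner_smul_right, real_inner_self_eq_norm_sq, he] at h3
          have := abs_le.1 h3
          linarith [this.1]
        have h4 : ε ^ 2 / 64 ≤ ⟪e, h⟫ ^ 2 := by nlinarith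
        have := mul_le_mul_of_nonneg_left h4 hγ
        linarith
      · rw [indicator_of_notMem hhB]
        have := mul_nonneg hγ (sq_nonneg ⟪e, h⟫)
        linarith
  have h2 : ∫ h in Dout, (a h - b h) ≤ ∫ h in Dout, T := by
    refine setIntegral_le_of_even_part hDm (by simp [Dout, Din]) (hao.sub hbo) ?_ ?_
    · exact integrableOn_const (measure_lt_top_mono sdiff_subset measure_ball_lt_top).ne
    · intro h hh
      exact hout h hh.1
  have h3 : ∫ h in Din, (T - B.indicator (fun _ => γ * (ε ^ 2 / 64)) h) =
      T * volume.real Din - γ * (ε ^ 2 / 64) * volume.real B := by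
    rw [integral_sub hT0
      ((integrable_indicator_iff measurableSet_ball).2 hconst), setIntegral_const,
      setIntegral_indicator measurableSet_ball, setIntegral_const, inter_eq_right.2 hBsub,
      smul_eq_mul, smul_eq_mul]
    ring
  have hvol : volume.real B = (1 / 8) ^ n * volume.real (ball (0 : EuclideanSpace ℝ (Fin n)) ε) :=
    volume_real_ball_scale _ _ hε (by norm_num)
  have hsplit : volume.real (ball (0 : EuclideanSpace ℝ (Fin n)) ε) =
      volume.real Din + volume.real Dout := by
    rw [← measureReal_inter_add_sdiff (s := ball 0 ε) (t := Din) measurableSet_ball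
      measure_ball_lt_top.ne, inter_eq_right.2 hsub]
  have hsa : ∫ h in ball 0 ε, a h = (∫ h in Din, a h) + ∫ h in Dout, a h := by
    rw [← setIntegral_union disjoint_sdiff_right hDm hai hao, union_sdiff_cancel hsub]
  have hsb : ∫ h in ball 0 ε, b h = (∫ h in Din, b h) + ∫ h in Dout, b h := by
    rw [← setIntegral_union disjoint_sdiff_right hDm hbi hbo, union_sdiff_cancel hsub]
  rw [integral_sub hai hbR, setIntegral_comp_isometry R b (isometry_preimage_ball R (ε / 2)),
    h3, hvol] at h1
  rw [integral_sub hao hbo, setIntegral_const, smul_eq_mul] at h2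
  rw [hsa, hsb]
  have hT : T * volume.real (ball (0 : EuclideanSpace ℝ (Fin n)) ε) =
      T * volume.real Din + T * volume.real Dout := by rw [hsplit]; ring
  rw [sub_mul T, hT]
  linarith

end Measure

section Tug

variable {n : ℕ}

/-- First order upper bound for `‖d + w‖` with a transversal correction. -/
lemma norm_add_le_of_transversal {d e w : EuclideanSpace ℝ (Fin n)} {s : ℝ} (hs : 0 < s)
    (he : ‖e‖ = 1) (hd : d = s • e) (hw : 2 * ‖w‖ ≤ s) :
    ‖d + w‖ ≤ s + ⟪e, w⟫ + (‖w‖ ^ 2 - ⟪e, w⟫ ^ 2) / s := by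
  have h1 : |⟪e, w⟫| ≤ ‖w‖ := by simpa [he] using abs_real_inner_le_norm e w
  have h2 := abs_le.1 h1
  have h3 : ⟪e, w⟫ ^ 2 ≤ ‖w‖ ^ 2 := sq_le_sq' h2.1 h2.2
  set q := ‖w‖ ^ 2 - ⟪e, w⟫ ^ 2 with hq
  have hq0 : 0 ≤ q := by linarith
  have hqs : 0 ≤ q / s := by positivity
  have h4 : ‖d + w‖ ^ 2 = (s + ⟪e, w⟫) ^ 2 + q := by
    rw [norm_add_sq_real, hd, real_inner_smul_left, norm_smul, he, Real.norm_of_nonneg hs.le, hq]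
    ring
  refine le_of_sq_le_sq ?_ (by linarith)
  have h5 : q / s * s = q := div_mul_cancel₀ _ hs.ne'
  rw [h4]
  nlinarith [mul_nonneg hqs (by linarith : (0 : ℝ) ≤ s + 2 * ⟪e, w⟫)]

lemma norm_add_le_of_short_step {d e w : EuclideanSpace ℝ (Fin n)} {s t : ℝ} (ht : 0 < t)
    (hts : 8 * t ≤ s) (he : ‖e‖ = 1) (hd : d = s • e) (hw : ‖w‖ ≤ 2 * t) :
    ‖d + w‖ ≤ s + 2 * t - (‖w‖ ^ 2 - ⟪e, w⟫ ^ 2) / (8 * t) := by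
  have hs : 0 < s := by linarith
  have h0 := norm_add_le_of_transversal hs he hd (w := w) (by linarith)
  have h1 : |⟪e, w⟫| ≤ ‖w‖ := by simpa [he] using abs_real_inner_le_norm e w
  have h2 := abs_le.1 h1
  have h3 : ⟪e, w⟫ ^ 2 ≤ ‖w‖ ^ 2 := sq_le_sq' h2.1 h2.2
  have hw2 : ‖w‖ ^ 2 ≤ 4 * t ^ 2 := by nlinarith [norm_nonneg w]
  set q := ‖w‖ ^ 2 - ⟪e, w⟫ ^ 2 with hq
  have hq0 : 0 ≤ q := by linarith
  have hq4 : q ≤ 4 * t ^ 2 := by nlinarith [sq_nonneg ⟪e, w⟫]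
  have h5 : q / s ≤ q / (8 * t) := div_le_div_of_nonneg_left hq0 (by positivity) hts
  have h6 : q / (8 * t) * (8 * t) = q := div_mul_cancel₀ _ (by positivity)
  set k := q / (8 * t) with hk
  have hk0 : 0 ≤ k := by positivity
  have hk2 : 2 * k ≤ t := by nlinarith
  have h7 : ⟪e, w⟫ ≤ 2 * t - 2 * k := by
    refine le_of_sq_le_sq ?_ (by linarith)
    nlinarith
  linarith

lemma exists_unit_smul_eq {d : EuclideanSpace ℝ (Fin n)} (hd : 0 < ‖d‖) :
    ∃ e : EuclideanSpace ℝ (Fin n), ‖e‖ = 1 ∧ d = ‖d‖ • e := by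
  refine ⟨‖d‖⁻¹ • d, ?_, ?_⟩
  · rw [norm_smul, norm_inv, norm_norm, inv_mul_cancel₀ hd.ne']
  · rw [smul_smul, mul_inv_cancel₀ hd.ne', one_smul]

/-- The sum of the best and the worst difference `u a - u b` over `B_t(x) × B_t(z)`. -/
noncomputable def tugDiff (u : EuclideanSpace ℝ (Fin n) → ℝ) (x z : EuclideanSpace ℝ (Fin n))
    (t : ℝ) : ℝ :=
  (sSup (u '' ball x t) + sInf (u '' ball x t)) - (sSup (u '' ball z t) + sInf (u '' ball z t))

variable {u : EuclideanSpace ℝ (Fin n) → ℝ} {x z : EuclideanSpace ℝ (Fin n)} {t K : ℝ}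

lemma bddAbove_image_of_abs_le {D : Set (EuclideanSpace ℝ (Fin n))} (hK : ∀ y ∈ D, |u y| ≤ K) :
    BddAbove (u '' D) :=
  ⟨K, forall_mem_image.2 fun y hy => (abs_le.1 (hK y hy)).2⟩

lemma bddBelow_image_of_abs_le {D : Set (EuclideanSpace ℝ (Fin n))} (hK : ∀ y ∈ D, |u y| ≤ K) :
    BddBelow (u '' D) :=
  ⟨-K, forall_mem_image.2 fun y hy => (abs_le.1 (hK y hy)).1⟩

lemma tugDiff_le_of_response (ht : 0 < t) (hx : ∀ y ∈ ball x t, |u y| ≤ K)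
    (hz : ∀ y ∈ ball z t, |u y| ≤ K) {T : ℝ}
    (h : ∀ J, (∀ a ∈ ball x t, ∀ b ∈ ball z t, J ≤ u a - u b) →
      ∀ a ∈ ball x t, ∀ b ∈ ball z t, u a - u b + J ≤ T) :
    tugDiff u x z t ≤ T := by
  have hbx := bddAbove_image_of_abs_le hx
  have hbz := bddAbove_image_of_abs_le hz
  have hbx' := bddBelow_image_of_abs_le hx
  have hbz' := bddBelow_image_of_abs_le hz
  have hJ := h (sInf (u '' ball x t) - sSup (u '' ball z t)) fun a ha b hb =>
    sub_le_sub (csInf_le hbx' (mem_image_of_mem u ha)) (le_csSup hbz (mem_image_of_mem u hb))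
  have hnx : (u '' ball x t).Nonempty := (nonempty_ball.2 ht).image u
  have hnz : (u '' ball z t).Nonempty := (nonempty_ball.2 ht).image u
  have h1 : ∀ b ∈ ball z t,
      sSup (u '' ball x t) ≤ T - (sInf (u '' ball x t) - sSup (u '' ball z t)) + u b := fun b hb =>
    csSup_le hnx (forall_mem_image.2 fun a ha => by linarith [hJ a ha b hb])
  have h2 : sSup (u '' ball x t) - (T - (sInf (u '' ball x t) - sSup (u '' ball z t))) ≤
      sInf (u '' ball z t) :=
    le_csInf hnz (forall_mem_image.2 fun b hb => by linarith [h1 b hb])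
  unfold tugDiff
  linarith

/-- If the two balls overlap, the worst difference is at most zero. -/
lemma tugDiff_le_of_overlap (ht : 0 < t) (hx : ∀ y ∈ ball x t, |u y| ≤ K)
    (hz : ∀ y ∈ ball z t, |u y| ≤ K) (hst : ‖x - z‖ < 2 * t) {T : ℝ}
    (h : ∀ a ∈ ball x t, ∀ b ∈ ball z t, u a - u b ≤ T) : tugDiff u x z t ≤ T := by
  refine tugDiff_le_of_response ht hx hz fun J hJ a ha b hb => ?_
  have hm1 : midpoint ℝ x z ∈ ball x t := by
    rw [mem_ball, dist_midpoint_left, dist_eq_norm]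
    norm_num; linarith
  have hm2 : midpoint ℝ x z ∈ ball z t := by
    rw [mem_ball, dist_midpoint_right, dist_eq_norm]
    norm_num; linarith
  have := hJ _ hm1 _ hm2
  linarith [h a ha b hb]

/-- If the differences of `u` are dominated by the cone `A (‖a - b‖ - s)` and a
localisation term, then pulling the points together or cancelling the move of the opponent controls
the tug-of-war part. -/
lemma tugDiff_le_of_cone (ht : 0 < t) (hx : ∀ y ∈ ball x t, |u y| ≤ K)
    (hz : ∀ y ∈ ball z t, |u y| ≤ K) (hst : 2 * t ≤ ‖x - z‖) {P A μ : ℝ}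
    {c : EuclideanSpace ℝ (Fin n)} (hA : 0 ≤ A) (hμ : 0 ≤ μ)
    (h : ∀ a ∈ ball x t, ∀ b ∈ ball z t,
      u a - u b ≤ P + A * (‖a - b‖ - ‖x - z‖) + μ * ‖a + b - c‖ ^ 2) :
    tugDiff u x z t ≤ 2 * (P + μ * ‖x + z - c‖ ^ 2) +
      2 * (μ * t ^ 2 * (32 * (‖x + z - c‖ / ‖x - z‖) + 8)) := by
  have hs : 0 < ‖x - z‖ := by linarith
  obtain ⟨e, he, hd⟩ := exists_unit_smul_eq hs
  set s := ‖x - z‖ with hs_def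
  set X := ‖x + z - c‖ with hX
  have hX0 : 0 ≤ X := norm_nonneg _
  refine tugDiff_le_of_response ht hx hz fun J hJ a ha b hb => ?_
  obtain ⟨f, rfl⟩ : ∃ f, a = x + f := ⟨a - x, by abel⟩
  obtain ⟨g, rfl⟩ : ∃ g, b = z + g := ⟨b - z, by abel⟩
  have hf : ‖f‖ < t := by simpa using ha
  have hg : ‖g‖ < t := by simpa using hb
  have hw : ‖f - g‖ ≤ 2 * t := by linarith [norm_sub_le f g]
  have hfg : ‖f + g‖ ≤ 2 * t := by linarith [norm_add_le f g]
  have hfg2 : ‖f + g‖ ^ 2 ≤ 4 * t ^ 2 := by nlinarith [norm_nonneg (f + g)]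
  have e1 : x + f - (z + g) = (x - z) + (f - g) := by abel
  have e2 : x + f + (z + g) - c = (x + z - c) + (f + g) := by abel
  have h0 := h _ ha _ hb
  rw [e1, e2] at h0
  have hloc : ‖(x + z - c) + (f + g)‖ ^ 2 ≤ X ^ 2 + 4 * t * X + 4 * t ^ 2 := by
    have := norm_add_le (x + z - c) (f + g)
    nlinarith [norm_nonneg ((x + z - c) + (f + g)), norm_nonneg (f + g)]
  -- pulling the points together
  have hpull : J ≤ P + A * (-(2 * t)) + μ * X ^ 2 := by
    have key : ∀ r : ℝ, 0 < r → r < t → J ≤ P + A * (-(2 * r)) + μ * X ^ 2 := by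
      intro r hr hrt
      have hre : ‖r • e‖ = r := by rw [norm_smul, he, Real.norm_of_nonneg hr.le, mul_one]
      have h1 : x - r • e ∈ ball x t := by simpa [dist_eq_norm, hre] using hrt
      have h2 : z + r • e ∈ ball z t := by simpa [dist_eq_norm, hre] using hrt
      have h3 := (hJ _ h1 _ h2).trans (h _ h1 _ h2)
      have e3 : x - r • e - (z + r • e) = (s - 2 * r) • e := by
        rw [sub_smul, ← hd, mul_smul, two_smul]; abel
      have e4 : x - r • e + (z + r • e) - c = x + z - c := by abel
      rw [e3, e4, norm_smul, he, Real.norm_of_nonneg (by linarith)] at h3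
      have e5 : (s - 2 * r) * 1 - s = -(2 * r) := by ring
      rwa [e5] at h3
    refine le_of_forall_pos_le_add fun η hη => ?_
    set r := max (t / 2) (t - η / (2 * A + 1)) with hr
    have hη' : 0 < η / (2 * A + 1) := by positivity
    have h1 := key r (lt_max_of_lt_left (by linarith)) (max_lt (by linarith) (by linarith))
    have h2 : t - η / (2 * A + 1) ≤ r := le_max_right _ _
    have h3 : η / (2 * A + 1) * (2 * A + 1) = η := div_mul_cancel₀ _ (by positivity)
    nlinarith
  by_cases hcase : s < 8 * t
  · have hn : ‖(x - z) + (f - g)‖ - s ≤ 2 * t := by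
      linarith [norm_add_le (x - z) (f - g)]
    have h1 : A * (‖(x - z) + (f - g)‖ - s) ≤ A * (2 * t) := mul_le_mul_of_nonneg_left hn hA
    have h2 : μ * ‖(x + z - c) + (f + g)‖ ^ 2 ≤ μ * (X ^ 2 + 4 * t * X + 4 * t ^ 2) :=
      mul_le_mul_of_nonneg_left hloc hμ
    have h3 : t * X ≤ 8 * (t ^ 2 * (X / s)) := by
      have : X / s * s = X := div_mul_cancel₀ _ hs.ne'
      have hXs : 0 ≤ X / s := by positivity
      calc t * X = t * (X / s) * s := by rw [mul_assoc, this]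
        _ ≤ t * (X / s) * (8 * t) := by gcongr
        _ = _ := by ring
    have h4 := mul_le_mul_of_nonneg_left h3 hμ
    have h5 : 0 ≤ μ * t ^ 2 := by positivity
    have h6 : 0 ≤ μ * (t ^ 2 * (X / s)) := by positivity
    linarith
  · push Not at hcase
    set q := ‖f - g‖ ^ 2 - ⟪e, f - g⟫ ^ 2 with hq
    by_cases hq1 : A * q ≤ 32 * μ * t ^ 2 * (X + t)
    · -- cancelling the move of the opponent
      have h1 : x - f ∈ ball x t := by simpa [dist_eq_norm] using hf
      have h2 : z - g ∈ ball z t := by simpa [dist_eq_norm] using hg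
      have h3 := (hJ _ h1 _ h2).trans (h _ h1 _ h2)
      have e3 : x - f - (z - g) = (x - z) + -(f - g) := by abel
      have e4 : x - f + (z - g) - c = (x + z - c) - (f + g) := by abel
      rw [e3, e4] at h3
      have n1 := norm_add_le_of_transversal hs he hd (w := f - g) (by linarith)
      have n2 := norm_add_le_of_transversal hs he hd (w := -(f - g)) (by rw [norm_neg]; linarith)
      rw [norm_neg, inner_neg_right, neg_sq, ← hq] at n2
      rw [← hq] at n1
      have n3 : A * (‖(x - z) + (f - g)‖ - s) + A * (‖(x - z) + -(f - g)‖ - s) ≤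
          2 * (A * q / s) := by
        have := mul_le_mul_of_nonneg_left (add_le_add n1 n2) hA
        have e5 : A * q / s = A * (q / s) := mul_div_assoc _ _ _
        rw [e5]; linarith
      have n4 : ‖(x + z - c) + (f + g)‖ ^ 2 + ‖(x + z - c) - (f + g)‖ ^ 2 ≤
          2 * X ^ 2 + 8 * t ^ 2 := by
        have := parallelogram_law_with_norm ℝ (x + z - c) (f + g)
        nlinarith
      have n5 := mul_le_mul_of_nonneg_left n4 hμ
      have n6 : A * q / s ≤ 32 * μ * t ^ 2 * (X / s) + 4 * (μ * t ^ 2) := by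
        rw [div_le_iff₀ hs]
        have : X / s * s = X := div_mul_cancel₀ _ hs.ne'
        have h7 : 0 ≤ μ * t ^ 2 := by positivity
        have h8 : (32 * μ * t ^ 2 * (X / s) + 4 * (μ * t ^ 2)) * s =
          32 * μ * t ^ 2 * X + 4 * (μ * t ^ 2) * s := by rw [add_mul, mul_assoc (32 * μ * t ^ 2), this]
        rw [h8]
        linarith [mul_le_mul_of_nonneg_left hcase h7]
      linarith
    · push Not at hq1
      have n1 := norm_add_le_of_short_step ht hcase he hd hw
      rw [← hq] at n1
      have n2 := mul_le_mul_of_nonneg_left n1 hA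
      have n3 : μ * ‖(x + z - c) + (f + g)‖ ^ 2 ≤ μ * (X ^ 2 + 4 * t * X + 4 * t ^ 2) :=
        mul_le_mul_of_nonneg_left hloc hμ
      have n4 : 4 * μ * t * (X + t) ≤ A * (q / (8 * t)) := by
        rw [← mul_div_assoc, le_div_iff₀ (by positivity)]
        linarith
      have h5 : 0 ≤ μ * t ^ 2 := by positivity
      have h6 : 0 ≤ μ * t ^ 2 * (X / s) := by positivity
      linarith

end Tug

section DPP

variable {n : ℕ}

/-- `u` is a bounded Borel solution of the dynamic programming principle in `Ω`, with weights
`α` (tug-of-war) and `β` (noise); `W` contains all the `ε`-balls centred in `Ω`. -/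
structure IsDPPSolution (Ω W : Set (EuclideanSpace ℝ (Fin n))) (ε α β : ℝ)
    (u : EuclideanSpace ℝ (Fin n) → ℝ) : Prop where
  measurable : Measurable u
  bounded : ∃ K, ∀ x ∈ W, |u x| ≤ K
  ball_subset : ∀ x ∈ Ω, ball x ε ⊆ W
  eq : ∀ x ∈ Ω, u x = α / (2 * ε) *
      (∫ t in (0 : ℝ)..ε, (sSup (u '' ball x t) + sInf (u '' ball x t))) +
    β * ⨍ z in ball x ε, u z

lemma intervalIntegrable_sSup_add_sInf {u : EuclideanSpace ℝ (Fin n) → ℝ}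
    {x : EuclideanSpace ℝ (Fin n)} {ε K : ℝ} (hε : 0 < ε) (hK : ∀ y ∈ ball x ε, |u y| ≤ K) :
    IntervalIntegrable (fun t => sSup (u '' ball x t) + sInf (u '' ball x t)) volume 0 ε := by
  rw [intervalIntegrable_iff, uIoc_of_le hε.le]
  have hK' : ∀ t ∈ Ioc 0 ε, ∀ y ∈ ball x t, |u y| ≤ K := fun t ht y hy =>
    hK y (ball_subset_ball ht.2 hy)
  have hne : ∀ t ∈ Ioc 0 ε, (u '' ball x t).Nonempty := fun t ht => (nonempty_ball.2 ht.1).image u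
  have hsup : MonotoneOn (fun t => sSup (u '' ball x t)) (Ioc 0 ε) := fun t ht t' ht' htt' =>
    csSup_le_csSup (bddAbove_image_of_abs_le (hK' t' ht')) (hne t ht)
      (image_mono (ball_subset_ball htt'))
  have hinf : AntitoneOn (fun t => sInf (u '' ball x t)) (Ioc 0 ε) := fun t ht t' ht' htt' =>
    csInf_le_csInf (bddBelow_image_of_abs_le (hK' t' ht')) (hne t ht)
      (image_mono (ball_subset_ball htt'))
  refine Integrable.add ?_ ?_
  · refine IntegrableOn.of_bound measure_Ioc_lt_top
      (aemeasurable_restrict_of_monotoneOn measurableSet_Ioc hsup).aestronglyMeasurable K ?_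
    filter_upwards [ae_restrict_mem measurableSet_Ioc] with t ht
    refine abs_le.2 ⟨?_, ?_⟩
    · exact (abs_le.1 (hK' t ht x (mem_ball_self ht.1))).1.trans
        (le_csSup (bddAbove_image_of_abs_le (hK' t ht)) (mem_image_of_mem u (mem_ball_self ht.1)))
    · exact csSup_le (hne t ht) (forall_mem_image.2 fun y hy => (abs_le.1 (hK' t ht y hy)).2)
  · refine IntegrableOn.of_bound measure_Ioc_lt_top
      (aemeasurable_restrict_of_antitoneOn measurableSet_Ioc hinf).aestronglyMeasurable K ?_
    filter_upwards [ae_restrict_mem measurableSet_Ioc] with t ht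
    refine abs_le.2 ⟨?_, ?_⟩
    · exact le_csInf (hne t ht) (forall_mem_image.2 fun y hy => (abs_le.1 (hK' t ht y hy)).1)
    · exact (csInf_le (bddBelow_image_of_abs_le (hK' t ht))
        (mem_image_of_mem u (mem_ball_self ht.1))).trans
        (abs_le.1 (hK' t ht x (mem_ball_self ht.1))).2

lemma intervalIntegral_le_of_le_const {f : ℝ → ℝ} {a b T : ℝ} (hab : a ≤ b)
    (hf : IntervalIntegrable f volume a b) (h : ∀ t ∈ Ioc a b, f t ≤ T) :
    ∫ t in a..b, f t ≤ (b - a) * T := by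
  rw [← smul_eq_mul, ← intervalIntegral.integral_const]
  exact intervalIntegral.integral_mono_on_of_le_Ioo hab hf intervalIntegrable_const
    fun t ht => h t (Ioo_subset_Ioc_self ht)

variable {Ω W : Set (EuclideanSpace ℝ (Fin n))} {ε α β : ℝ} {u : EuclideanSpace ℝ (Fin n) → ℝ}

lemma IsDPPSolution.intervalIntegrable_tugDiff (hu : IsDPPSolution Ω W ε α β u) (hε : 0 < ε)
    {x z : EuclideanSpace ℝ (Fin n)} (hx : x ∈ Ω) (hz : z ∈ Ω) :
    IntervalIntegrable (tugDiff u x z) volume 0 ε := by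
  obtain ⟨K, hK⟩ := hu.bounded
  exact (intervalIntegrable_sSup_add_sInf hε fun y hy => hK y (hu.ball_subset x hx hy)).sub
    (intervalIntegrable_sSup_add_sInf hε fun y hy => hK y (hu.ball_subset z hz hy))

lemma IsDPPSolution.sub_eq (hu : IsDPPSolution Ω W ε α β u) (hε : 0 < ε)
    {x z : EuclideanSpace ℝ (Fin n)} (hx : x ∈ Ω) (hz : z ∈ Ω) :
    u x - u z = α / (2 * ε) * (∫ t in (0 : ℝ)..ε, tugDiff u x z t) +
      β * ((volume.real (ball (0 : EuclideanSpace ℝ (Fin n)) ε))⁻¹ *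
        ((∫ h in ball 0 ε, u (x + h)) - ∫ h in ball 0 ε, u (z + h))) := by
  obtain ⟨K, hK⟩ := hu.bounded
  have h1 := intervalIntegrable_sSup_add_sInf hε fun y hy => hK y (hu.ball_subset x hx hy)
  have h2 := intervalIntegrable_sSup_add_sInf hε fun y hy => hK y (hu.ball_subset z hz hy)
  have h3 : ∫ t in (0 : ℝ)..ε, tugDiff u x z t = _ := intervalIntegral.integral_sub h1 h2
  rw [h3, hu.eq x hx, hu.eq z hz, setAverage_ball_eq, setAverage_ball_eq]
  ring

/-- A maximum principle: a function which is at most a weighted mean of its supremum and of its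
averages over small balls is bounded by its boundary values. -/
lemma le_of_le_sup_add_average [NeZero n] {g : EuclideanSpace ℝ (Fin n) → ℝ} {δ : ℝ}
    (hε : 0 < ε) (hβ : 0 < β) (hαβ : α + β = 1)
    (hW : Bornology.IsBounded W) (hball : ∀ x ∈ Ω, ball x ε ⊆ W)
    (hgm : Measurable g) (hgb : ∃ K, ∀ x ∈ W, |g x| ≤ K)
    (hgΩ : ∀ K, (∀ y ∈ W, g y ≤ K) → ∀ x ∈ Ω, g x ≤ α * K + β * ⨍ z in ball x ε, g z)
    (hgW : ∀ x ∈ W, x ∉ Ω → g x ≤ δ) : ∀ x ∈ W, g x ≤ δ := by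
  by_contra! hcon
  obtain ⟨x₀, hx₀, hx₀δ⟩ := hcon
  obtain ⟨K₀, hK₀⟩ := hgb
  set K := sSup (g '' W)
  have hbdd : BddAbove (g '' W) := bddAbove_image_of_abs_le hK₀
  have hgK : ∀ y ∈ W, g y ≤ K := fun y hy => le_csSup hbdd (mem_image_of_mem g hy)
  have hKδ : δ < K := hx₀δ.trans_le (hgK x₀ hx₀)
  obtain ⟨e, he⟩ : ∃ e : EuclideanSpace ℝ (Fin n), ‖e‖ = 1 :=
    ⟨EuclideanSpace.single 0 1, by simp⟩
  obtain ⟨R, hR⟩ := hW.exists_norm_le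
  have hinner : ∀ y ∈ W, |⟪e, y⟫| ≤ R := fun y hy =>
    (abs_real_inner_le_norm e y).trans (by rw [he, one_mul]; exact hR y hy)
  have key : ∀ k : ℕ, ∃ c > 0, ∀ x ∈ W, R + 1 - k * (ε / 2) ≤ ⟪e, x⟫ → c ≤ K - g x := by
    intro k
    induction k with
    | zero =>
      refine ⟨1, one_pos, fun x hx h => ?_⟩
      have := (abs_le.1 (hinner x hx)).2
      norm_num at h
      linarith
    | succ k ih =>
      obtain ⟨c, hc, hck⟩ := ih
      refine ⟨min (K - δ) (β * ((1 / 4) ^ n * c)), lt_min (by linarith) (by positivity),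
        fun x hx h => ?_⟩
      by_cases hxΩ : x ∈ Ω
      · refine (min_le_right _ _).trans ?_
        have hsub : ball ((3 / 4 * ε) • e) (1 / 4 * ε) ⊆ ball 0 ε := by
          apply ball_subset_ball'
          rw [dist_zero_right, norm_smul, he, Real.norm_of_nonneg (by positivity)]
          linarith
        have hmem : ∀ h ∈ ball 0 ε, x + h ∈ W := fun h hh =>
          hball x hxΩ (by simpa using hh)
        have hgint : IntegrableOn (fun h => g (x + h)) (ball 0 ε) :=
          integrableOn_ball_translate hgm fun y hy => hK₀ y (hball x hxΩ hy)
        have hVpos := volume_real_ball_pos (0 : EuclideanSpace ℝ (Fin n)) hε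
        have hind : Integrable ((ball ((3 / 4 * ε) • e) (1 / 4 * ε)).indicator fun _ => c)
            (volume.restrict (ball 0 ε)) :=
          (integrable_indicator_iff measurableSet_ball).2 (integrableOn_const
            ((Measure.restrict_apply_le _ _).trans_lt (measure_ball_lt_top (μ := volume))).ne)
        have hKint : Integrable (fun _ => K)
            (volume.restrict (ball (0 : EuclideanSpace ℝ (Fin n)) ε)) :=
          integrableOn_const measure_ball_lt_top.ne
        have h1 : ∫ h in ball 0 ε, g (x + h) ≤
            ∫ h in ball 0 ε, (K - (ball ((3 / 4 * ε) • e) (1 / 4 * ε)).indicator (fun _ => c) h) := by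
          refine setIntegral_mono_on hgint (hKint.sub hind) measurableSet_ball fun y hy => ?_
          by_cases hyB : y ∈ ball ((3 / 4 * ε) • e) (1 / 4 * ε)
          · rw [indicator_of_mem hyB]
            have h3 : |⟪e, y - (3 / 4 * ε) • e⟫| ≤ ‖e‖ * ‖y - (3 / 4 * ε) • e‖ :=
              abs_real_inner_le_norm _ _
            rw [mem_ball, dist_eq_norm] at hyB
            rw [inner_sub_right, inner_smul_right, real_inner_self_eq_norm_sq, he] at h3
            have h4 := (abs_le.1 h3).1
            have h5 := hck (x + y) (hmem y hy) (by
              rw [inner_add_right]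
              push_cast at h
              linarith)
            linarith
          · rw [indicator_of_notMem hyB]
            linarith [hgK _ (hmem y hy)]
        rw [integral_sub hKint hind, setIntegral_const, setIntegral_indicator measurableSet_ball,
          setIntegral_const, inter_eq_right.2 hsub, smul_eq_mul, smul_eq_mul,
          volume_real_ball_scale _ 0 hε (by norm_num : (0 : ℝ) < 1 / 4)] at h1
        have h2 := hgΩ K hgK x hxΩ
        rw [setAverage_ball_eq] at h2
        have h3 : (volume.real (ball (0 : EuclideanSpace ℝ (Fin n)) ε))⁻¹ *
            (∫ h in ball 0 ε, g (x + h)) ≤ K - (1 / 4) ^ n * c := by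
          rw [inv_mul_le_iff₀ hVpos]
          linarith
        have h4 := mul_le_mul_of_nonneg_left h3 hβ.le
        have h5 : α * K + β * K = K := by rw [← add_mul, hαβ, one_mul]
        linarith
      · exact (min_le_left _ _).trans (by linarith [hgW x hx hxΩ])
  obtain ⟨k, hk⟩ := exists_nat_gt ((2 * R + 1) / (ε / 2))
  obtain ⟨c, hc, hck⟩ := key k
  rw [div_lt_iff₀ (by positivity)] at hk
  have hle : K ≤ K - c := by
    refine csSup_le ⟨_, mem_image_of_mem g hx₀⟩ (forall_mem_image.2 fun y hy => ?_)
    have := hck y hy (by linarith [(abs_le.1 (hinner y hy)).1])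
    linarith
  linarith

lemma setAverage_ball_affine (x v : EuclideanSpace ℝ (Fin n)) (b : ℝ) (hε : 0 < ε) :
    ⨍ z in ball x ε, (⟪v, z⟫ + b) = ⟪v, x⟫ + b := by
  have hVpos := volume_real_ball_pos (0 : EuclideanSpace ℝ (Fin n)) hε
  have hcont : Continuous fun h : EuclideanSpace ℝ (Fin n) => ⟪v, x + h⟫ + b := by fun_prop
  have hgint : IntegrableOn (fun h => ⟪v, x + h⟫ + b) (ball 0 ε) :=
    (hcont.continuousOn.integrableOn_compact (isCompact_closedBall 0 ε)).mono_set
      ball_subset_closedBall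
  have hconst : IntegrableOn (fun _ => ⟪v, x⟫ + b) (ball (0 : EuclideanSpace ℝ (Fin n)) ε) :=
    integrableOn_const measure_ball_lt_top.ne
  have h1 := setIntegral_le_of_even_part measurableSet_ball (by simp) hgint hconst fun h _ => by
    simp only [inner_add_right, inner_neg_right]; linarith
  have h2 := setIntegral_le_of_even_part measurableSet_ball (by simp) hgint.neg hconst.neg
    fun h _ => by
      simp only [Pi.neg_apply, inner_add_right, inner_neg_right]; linarith
  simp only [Pi.neg_apply, integral_neg, neg_le_neg_iff] at h2
  rw [setAverage_ball_eq, le_antisymm h1 h2, setIntegral_const, smul_eq_mul,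
    inv_mul_cancel_left₀ (ne_of_gt hVpos)]

/-- A solution whose boundary values are `δ`-close to a plane is `δ`-close to that plane. -/
lemma IsDPPSolution.abs_sub_affine_le [NeZero n] (hu : IsDPPSolution Ω W ε α β u) (hε : 0 < ε)
    (hα : 0 < α) (hβ : 0 < β) (hαβ : α + β = 1) (hW : Bornology.IsBounded W)
    {v : EuclideanSpace ℝ (Fin n)} {b δ : ℝ}
    (hbd : ∀ x ∈ W, x ∉ Ω → |u x - (⟪v, x⟫ + b)| ≤ δ) :
    ∀ x ∈ W, |u x - (⟪v, x⟫ + b)| ≤ δ := by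
  obtain ⟨K₀, hK₀⟩ := hu.bounded
  obtain ⟨R, hR⟩ := hW.exists_norm_le
  have hmeas : Measurable fun x => ⟪v, x⟫ + b := by fun_prop
  have hbnd : ∀ x ∈ W, |u x - (⟪v, x⟫ + b)| ≤ K₀ + (‖v‖ * R + |b|) := by
    intro x hx
    refine (abs_sub _ _).trans (add_le_add (hK₀ x hx) ((abs_add_le _ _).trans ?_))
    gcongr
    exact (abs_real_inner_le_norm v x).trans (by gcongr; exact hR x hx)
  have haff : ∀ x ∈ Ω, IntegrableOn (fun z => ⟪v, z⟫ + b) (ball x ε) := fun x _ =>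
    ((by fun_prop : Continuous fun z : EuclideanSpace ℝ (Fin n) => ⟪v, z⟫ + b).continuousOn.integrableOn_compact
      (isCompact_closedBall x ε)).mono_set ball_subset_closedBall
  have huint : ∀ x ∈ Ω, IntegrableOn u (ball x ε) := fun x hx =>
    IntegrableOn.of_bound measure_ball_lt_top hu.measurable.aestronglyMeasurable K₀ (by
      filter_upwards [ae_restrict_mem measurableSet_ball] with y hy
      exact hK₀ y (hu.ball_subset x hx hy))
  have havg : ∀ x ∈ Ω, ⨍ z in ball x ε, (u z - (⟪v, z⟫ + b)) =
      (⨍ z in ball x ε, u z) - (⟪v, x⟫ + b) := by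
    intro x hx
    rw [← setAverage_ball_affine x v b hε]
    simp only [setAverage_eq]
    rw [integral_sub (huint x hx) (haff x hx), smul_sub]
  have hrefl : ∀ (x : EuclideanSpace ℝ (Fin n)) (t : ℝ), ∀ y ∈ ball x t, (2 : ℝ) • x - y ∈ ball x t := by
    intro x t y hy
    rw [mem_ball, dist_eq_norm] at hy ⊢
    rwa [two_smul, show x + x - y - x = -(y - x) by abel, norm_neg]
  have hinn : ∀ x y : EuclideanSpace ℝ (Fin n), ⟪v, (2 : ℝ) • x - y⟫ = 2 * ⟪v, x⟫ - ⟪v, y⟫ :=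
    fun x y => by rw [inner_sub_right, inner_smul_right]
  have htug : ∀ x ∈ Ω, ∀ t ∈ Ioc 0 ε, (∀ K, (∀ y ∈ W, u y - (⟪v, y⟫ + b) ≤ K) →
        sSup (u '' ball x t) + sInf (u '' ball x t) ≤ 2 * (⟪v, x⟫ + b + K)) ∧
      (∀ K, (∀ y ∈ W, -(u y - (⟪v, y⟫ + b)) ≤ K) →
        2 * (⟪v, x⟫ + b - K) ≤ sSup (u '' ball x t) + sInf (u '' ball x t)) := by
    intro x hx t ht
    have hsub : ball x t ⊆ W := (ball_subset_ball ht.2).trans (hu.ball_subset x hx)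
    have hne : (u '' ball x t).Nonempty := (nonempty_ball.2 ht.1).image u
    constructor
    · intro K hK
      have : sSup (u '' ball x t) ≤ 2 * (⟪v, x⟫ + b + K) - sInf (u '' ball x t) := by
        refine csSup_le hne (forall_mem_image.2 fun y hy => ?_)
        have h1 := csInf_le (bddBelow_image_of_abs_le fun y hy => hK₀ y (hsub hy))
          (mem_image_of_mem u (hrefl x t y hy))
        have h2 := hK y (hsub hy)
        have h3 := hK _ (hsub (hrefl x t y hy))
        rw [hinn] at h3
        linarith
      linarith
    · intro K hK
      have : 2 * (⟪v, x⟫ + b - K) - sSup (u '' ball x t) ≤ sInf (u '' ball x t) := by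
        refine le_csInf hne (forall_mem_image.2 fun y hy => ?_)
        have h1 := le_csSup (bddAbove_image_of_abs_le fun y hy => hK₀ y (hsub hy))
          (mem_image_of_mem u (hrefl x t y hy))
        have h2 := hK y (hsub hy)
        have h3 := hK _ (hsub (hrefl x t y hy))
        rw [hinn] at h3
        linarith
      linarith
  have hsc : ∀ T : ℝ, α / (2 * ε) * ((ε - 0) * (2 * T)) = α * T := fun T => by
    field_simp; ring
  have hup : ∀ x ∈ W, u x - (⟪v, x⟫ + b) ≤ δ := by
    refine le_of_le_sup_add_average (g := fun x => u x - (⟪v, x⟫ + b)) hε hβ hαβ hW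
      hu.ball_subset (hu.measurable.sub hmeas) ⟨_, hbnd⟩ ?_
      fun x hx hxΩ => (abs_le.1 (hbd x hx hxΩ)).2
    intro K hK x hx
    have h1 := intervalIntegral_le_of_le_const hε.le
      (intervalIntegrable_sSup_add_sInf hε fun y hy => hK₀ y (hu.ball_subset x hx hy))
      fun t ht => (htug x hx t ht).1 K hK
    have h2 := mul_le_mul_of_nonneg_left h1 (by positivity : 0 ≤ α / (2 * ε))
    rw [hsc] at h2
    have h3 := hu.eq x hx
    have h5 : α * (⟪v, x⟫ + b) + β * (⟪v, x⟫ + b) = ⟪v, x⟫ + b := by rw [← add_mul, hαβ, one_mul]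
    rw [havg x hx]
    linarith
  have hlow : ∀ x ∈ W, -(u x - (⟪v, x⟫ + b)) ≤ δ := by
    refine le_of_le_sup_add_average (g := fun x => -(u x - (⟪v, x⟫ + b))) hε hβ hαβ hW
      hu.ball_subset (hu.measurable.sub hmeas).neg ⟨_, fun x hx => by rw [abs_neg]; exact hbnd x hx⟩
      ?_ fun x hx hxΩ => by linarith [(abs_le.1 (hbd x hx hxΩ)).1]
    intro K hK x hx
    have h1 := intervalIntegral_le_of_le_const hε.le
      (intervalIntegrable_sSup_add_sInf hε fun y hy => hK₀ y (hu.ball_subset x hx hy)).neg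
      fun t ht => (neg_le_neg ((htug x hx t ht).2 K hK)).trans_eq
        (by ring : _ = 2 * (K - (⟪v, x⟫ + b)))
    have h2 := mul_le_mul_of_nonneg_left h1 (by positivity : 0 ≤ α / (2 * ε))
    simp only [Pi.neg_apply, intervalIntegral.integral_neg] at h2
    rw [hsc] at h2
    have h3 := hu.eq x hx
    have h4 : ⨍ z in ball x ε, -(u z - (⟪v, z⟫ + b)) =
        -((⨍ z in ball x ε, u z) - (⟪v, x⟫ + b)) := by
      rw [← havg x hx, setAverage_eq, setAverage_eq, integral_neg, smul_neg]
    have h5 : α * (⟪v, x⟫ + b) + β * (⟪v, x⟫ + b) = ⟪v, x⟫ + b := by rw [← add_mul, hαβ, one_mul]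
    rw [h4]
    linarith
  intro x hx
  exact abs_le.2 ⟨by linarith [hlow x hx], hup x hx⟩

end DPP

section Barrier

variable {n : ℕ}

/-- A concave modulus `ψ` with slopes `m` and curvatures `κ` at the points of `(0, r)`, whose
increments over an interval of length `2ε` are at most `B`. -/
structure IsConcaveProfile (r ε B : ℝ) (ψ m κ : ℝ → ℝ) : Prop where
  nonneg : ∀ y ∈ Icc 0 (3 * r), 0 ≤ ψ y
  two_le : ∀ y ∈ Icc r (3 * r), 2 ≤ ψ y
  slope_nonneg : ∀ s ∈ Ioo 0 r, 0 ≤ m s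
  curv_nonneg : ∀ s ∈ Ioo 0 r, 0 ≤ κ s
  le_tangent : ∀ s ∈ Ioo 0 r, ∀ y ∈ Icc 0 (3 * r), ψ y ≤ ψ s + m s * (y - s)
  le_parabola : ∀ s ∈ Ioo 0 r, ∀ y ∈ Icc 0 (2 * s), ψ y ≤ ψ s + m s * (y - s) - κ s * (y - s) ^ 2
  increment_nonneg : 0 ≤ B
  increment_le : ∀ s ∈ Ioo 0 r, ∀ y ∈ Icc s (s + 2 * ε), ψ y ≤ ψ s + B

/-- The comparison function on pairs of points. -/
noncomputable def pairBarrier (N δ M L : ℝ) (ψ : ℝ → ℝ) (c x z : EuclideanSpace ℝ (Fin n)) : ℝ :=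
  N * ‖x - z‖ + δ * ψ ‖x - z‖ + M * δ * ‖x + z - c‖ ^ 2 + L

/-- The size, relative to `δ ε`, of the jump of the comparison function on the diagonal. -/
noncomputable def jumpConst (α r : ℝ) : ℝ :=
  2 / r ^ 2 * (36 * r + 20) + 4 / α * (4 * (2 / r ^ 2) + 1)

lemma jumpConst_pos {α r : ℝ} (hα : 0 < α) (hr : 0 < r) : 0 < jumpConst α r := by
  unfold jumpConst; positivity

/-- The reflection in the hyperplane orthogonal to a unit vector. -/
lemma exists_reflection {e : EuclideanSpace ℝ (Fin n)} (he : ‖e‖ = 1) :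
    ∃ R : EuclideanSpace ℝ (Fin n) ≃ₗᵢ[ℝ] EuclideanSpace ℝ (Fin n),
      ∀ h, h - R h = (2 * ⟪e, h⟫) • e := by
  refine ⟨(ℝ ∙ e).reflection.trans (LinearIsometryEquiv.neg ℝ), fun h => ?_⟩
  rw [LinearIsometryEquiv.trans_apply, LinearIsometryEquiv.coe_neg,
    Submodule.reflection_singleton_apply, he]
  simp only [RCLike.ofReal_real_eq_id, id, one_pow, div_one, two_smul, two_mul, add_smul]
  abel

variable {Ω W : Set (EuclideanSpace ℝ (Fin n))} {ε α β : ℝ} {u : EuclideanSpace ℝ (Fin n) → ℝ}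

set_option maxHeartbeats 1000000 in
/-- One step of the comparison argument: a bound for `u x - u z` by the barrier plus an error `S`
self-improves. -/
lemma IsDPPSolution.barrier_improvement (hu : IsDPPSolution Ω W ε α β u) (hε : 0 < ε) (hε1 : ε < 1)
    (hα : 0 < α) (hβ : 0 < β) (hαβ : α + β = 1) {r δ N B : ℝ} (hεr : ε < r) (hδ : 0 < δ)
    (hN : 0 ≤ N) (hplane : ∀ x ∈ W, ∀ z ∈ W, u x - u z ≤ N * ‖x - z‖ + 2 * δ)
    {c : EuclideanSpace ℝ (Fin n)} (hc : ball ((1 / 2 : ℝ) • c) r ⊆ Ω) {ψ m κ : ℝ → ℝ}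
    (hψ : IsConcaveProfile r ε B ψ m κ) {L : ℝ}
    (hL : L = 2 * N * ε + δ * B + δ * jumpConst α r * ε)
    (hκ : ∀ x z, ‖x + z - c‖ < r → ε ≤ ‖x - z‖ → ‖x - z‖ < r →
      pairBarrier N δ (2 / r ^ 2) L ψ c x z < u x - u z →
      2 / r ^ 2 * (32 * (‖x + z - c‖ / ‖x - z‖) + 12) + 1 ≤ β * ((1 / 8) ^ n / 16) * κ ‖x - z‖)
    {S : ℝ} (hS0 : 0 ≤ S)
    (hS : ∀ x z, ‖x + z - c‖ < r → 0 < ‖x - z‖ → ‖x - z‖ < r →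
      u x - u z ≤ pairBarrier N δ (2 / r ^ 2) L ψ c x z + S) :
    ∀ x z, ‖x + z - c‖ < r → 0 < ‖x - z‖ → ‖x - z‖ < r →
      u x - u z ≤ pairBarrier N δ (2 / r ^ 2) L ψ c x z + max 0 (S - δ * ε ^ 2) := by
  have hr : 0 < r := hε.trans hεr
  set M := 2 / r ^ 2 with hM
  have hM0 : 0 < M := by positivity
  have hMr : M * r ^ 2 = 2 := div_mul_cancel₀ _ (by positivity)
  have hJ : 0 < jumpConst α r := jumpConst_pos hα hr
  have hB := hψ.increment_nonneg
  have hL0 : 0 ≤ L := by rw [hL]; positivity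
  have hfar : ∀ a ∈ W, ∀ b ∈ W, ‖a - b‖ ≤ 3 * r →
      u a - u b ≤ pairBarrier N δ M L ψ c a b + S := by
    intro a ha b hb hab
    have hψ0 := mul_nonneg hδ.le (hψ.nonneg ‖a - b‖ ⟨norm_nonneg _, hab⟩)
    have hNa : 0 ≤ N * ‖a - b‖ := by positivity
    have hMa : 0 ≤ M * δ * ‖a + b - c‖ ^ 2 := by positivity
    rcases eq_or_ne a b with rfl | hne
    · unfold pairBarrier
      linarith
    have hpos : 0 < ‖a - b‖ := norm_pos_iff.2 (sub_ne_zero.2 hne)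
    have hpl := hplane a ha b hb
    by_cases h1 : ‖a - b‖ < r
    · by_cases h2 : ‖a + b - c‖ < r
      · exact hS a b h2 hpos h1
      · push Not at h2
        have h3 : r ^ 2 ≤ ‖a + b - c‖ ^ 2 := by gcongr
        have h4 : M * δ * r ^ 2 ≤ M * δ * ‖a + b - c‖ ^ 2 := by gcongr
        have h5 : M * δ * r ^ 2 = 2 * δ := by rw [mul_right_comm, hMr]
        unfold pairBarrier
        linarith
    · push Not at h1
      have h3 := mul_le_mul_of_nonneg_left (hψ.two_le ‖a - b‖ ⟨h1, hab⟩) hδ.le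
      unfold pairBarrier
      linarith
  intro x z hX hs0 hsr
  by_cases hgt : u x - u z ≤ pairBarrier N δ M L ψ c x z
  · linarith [le_max_left 0 (S - δ * ε ^ 2)]
  push Not at hgt
  refine le_trans ?_ (add_le_add_right (le_max_right 0 (S - δ * ε ^ 2)) _)
  have hxΩ : x ∈ Ω := by
    apply hc
    rw [mem_ball, dist_eq_norm,
      show x - (1 / 2 : ℝ) • c = (1 / 2 : ℝ) • ((x + z - c) + (x - z)) by module, norm_smul]
    have := norm_add_le (x + z - c) (x - z)
    norm_num
    linarith
  have hzΩ : z ∈ Ω := by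
    apply hc
    rw [mem_ball, dist_eq_norm,
      show z - (1 / 2 : ℝ) • c = (1 / 2 : ℝ) • ((x + z - c) - (x - z)) by module, norm_smul]
    have := norm_sub_le (x + z - c) (x - z)
    norm_num
    linarith
  have hxW := hu.ball_subset x hxΩ
  have hzW := hu.ball_subset z hzΩ
  obtain ⟨K, hK⟩ := hu.bounded
  have hnear : ∀ f g : EuclideanSpace ℝ (Fin n), ‖f‖ < ε → ‖g‖ < ε →
      ‖x - z + (f - g)‖ ≤ ‖x - z‖ + 2 * ε ∧
      u (x + f) - u (z + g) ≤ N * ‖x - z + (f - g)‖ + δ * ψ ‖x - z + (f - g)‖ +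
        M * δ * ‖x + z - c + (f + g)‖ ^ 2 + (L + S) := by
    intro f g hf hg
    have h1 : ‖x - z + (f - g)‖ ≤ ‖x - z‖ + 2 * ε := by
      linarith [norm_add_le (x - z) (f - g), norm_sub_le f g]
    refine ⟨h1, ?_⟩
    have e1 : x + f - (z + g) = x - z + (f - g) := by abel
    have e2 : x + f + (z + g) - c = x + z - c + (f + g) := by abel
    have h2 := hfar (x + f) (hxW (by simpa using hf)) (z + g) (hzW (by simpa using hg))
      (by rw [e1]; linarith)
    unfold pairBarrier at h2
    rw [e1, e2] at h2
    linarith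
  obtain ⟨e, he, hd⟩ := exists_unit_smul_eq hs0
  obtain ⟨R, hR⟩ := exists_reflection he
  have hx3 : ‖x - z‖ ∈ Ioo 0 r := ⟨hs0, hsr⟩
  have hpar := hψ.le_parabola _ hx3
  have htan := hψ.le_tangent _ hx3
  have hinc := hψ.increment_le _ hx3
  have hm0 := hψ.slope_nonneg _ hx3
  have hκ0 := hψ.curv_nonneg _ hx3
  have hκ := hκ x z hX
  have hbar : pairBarrier N δ M L ψ c x z = N * ‖x - z‖ + δ * ψ ‖x - z‖ +
    M * δ * ‖x + z - c‖ ^ 2 + L := rfl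
  set F := pairBarrier N δ M L ψ c x z with hF
  set s := ‖x - z‖ with hs
  set X := ‖x + z - c‖ with hXdef
  have hX0 : 0 ≤ X := norm_nonneg _
  set V := volume.real (ball (0 : EuclideanSpace ℝ (Fin n)) ε) with hV
  have hVpos : 0 < V := volume_real_ball_pos 0 hε
  set T := F + S + 4 * (M * δ * ε ^ 2) with hT
  -- opposite moves
  have hsym : ∀ f g : EuclideanSpace ℝ (Fin n), ‖f‖ < ε → ‖g‖ < ε →
      u (x + f) - u (z + g) + (u (x + -f) - u (z + -g)) ≤
        N * ‖x - z + (f - g)‖ + δ * ψ ‖x - z + (f - g)‖ +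
        (N * ‖x - z - (f - g)‖ + δ * ψ ‖x - z - (f - g)‖) +
        2 * (T - N * s - δ * ψ s) := by
    intro f g hf hg
    have h1 := (hnear f g hf hg).2
    have h2 := (hnear (-f) (-g) (by rwa [norm_neg]) (by rwa [norm_neg])).2
    rw [show -f - -g = -(f - g) by abel, show -f + -g = -(f + g) by abel,
      ← sub_eq_add_neg (x - z), ← sub_eq_add_neg (x + z - c)] at h2
    have h3 : ‖x + z - c + (f + g)‖ ^ 2 + ‖x + z - c - (f + g)‖ ^ 2 ≤ 2 * X ^ 2 + 8 * ε ^ 2 := by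
      have h4 := parallelogram_law_with_norm ℝ (x + z - c) (f + g)
      have h5 : ‖f + g‖ ≤ 2 * ε := by linarith [norm_add_le f g]
      nlinarith [norm_nonneg (f + g)]
    have h6 := mul_le_mul_of_nonneg_left h3 (by positivity : 0 ≤ M * δ)
    rw [hT, hbar]
    linarith
  have hsync : ∀ h ∈ ball (0 : EuclideanSpace ℝ (Fin n)) ε,
      u (x + h) - u (z + h) + (u (x + -h) - u (z + -h)) ≤ 2 * T := by
    intro h hh
    have hh' : ‖h‖ < ε := by simpa using hh
    have := hsym h h hh' hh'
    rw [sub_self, add_zero, sub_zero, ← hs] at this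
    linarith
  have hintx : IntegrableOn (fun h => u (x + h)) (ball 0 ε) :=
    integrableOn_ball_translate hu.measurable fun y hy => hK y (hxW hy)
  have hintz : IntegrableOn (fun h => u (z + h)) (ball 0 ε) :=
    integrableOn_ball_translate hu.measurable fun y hy => hK y (hzW hy)
  -- tug-of-war part
  have htmem : ∀ t ∈ Ioc 0 ε, (∀ y ∈ ball x t, |u y| ≤ K) ∧ ∀ y ∈ ball z t, |u y| ≤ K :=
    fun t ht => ⟨fun y hy => hK y (hxW (ball_subset_ball ht.2 hy)),
      fun y hy => hK y (hzW (ball_subset_ball ht.2 hy))⟩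
  have hcone : ∀ t ∈ Ioc 0 ε, 2 * t ≤ s → tugDiff u x z t ≤ 2 * (F + S) +
      2 * (M * δ * t ^ 2 * (32 * (X / s) + 8)) := by
    intro t ht hts
    have := tugDiff_le_of_cone (P := S + L + N * s + δ * ψ s) (A := N + δ * m s) (μ := M * δ)
      (c := c) ht.1 (htmem t ht).1 (htmem t ht).2 hts (by positivity) (by positivity) ?_
    · rw [← hXdef, ← hs] at this
      rw [hbar]
      linarith
    · intro a ha b hb
      obtain ⟨f, rfl⟩ : ∃ f, a = x + f := ⟨a - x, by abel⟩
      obtain ⟨g, rfl⟩ : ∃ g, b = z + g := ⟨b - z, by abel⟩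
      have hf : ‖f‖ < t := by simpa using ha
      have hg : ‖g‖ < t := by simpa using hb
      obtain ⟨h1, h2⟩ := hnear f g (by linarith [ht.2]) (by linarith [ht.2])
      have h3 := mul_le_mul_of_nonneg_left
        (htan ‖x - z + (f - g)‖ ⟨norm_nonneg _, by linarith⟩) hδ.le
      rw [show x + f - (z + g) = x - z + (f - g) by abel,
        show x + f + (z + g) - c = x + z - c + (f + g) by abel, ← hs]
      linarith
  have hover : ∀ t ∈ Ioc 0 ε, s < 2 * t → tugDiff u x z t ≤ 2 * (F + S) -
      δ * (jumpConst α r * ε - M * (4 * ε * r + 4 * ε ^ 2)) := by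
    intro t ht hts
    refine tugDiff_le_of_overlap ht.1 (htmem t ht).1 (htmem t ht).2 hts fun a ha b hb => ?_
    obtain ⟨f, rfl⟩ : ∃ f, a = x + f := ⟨a - x, by abel⟩
    obtain ⟨g, rfl⟩ : ∃ g, b = z + g := ⟨b - z, by abel⟩
    have hf : ‖f‖ < ε := lt_of_lt_of_le (by simpa using ha) ht.2
    have hg : ‖g‖ < ε := lt_of_lt_of_le (by simpa using hb) ht.2
    obtain ⟨h1, h2⟩ := hnear f g hf hg
    set y := ‖x - z + (f - g)‖
    have h3 : ψ y ≤ ψ s + B := by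
      by_cases hys : s ≤ y
      · exact hinc y ⟨hys, h1⟩
      · push Not at hys
        have := htan y ⟨norm_nonneg _, by linarith⟩
        have h4 : m s * (y - s) ≤ 0 := mul_nonpos_of_nonneg_of_nonpos hm0 (by linarith)
        linarith
    have h4 := mul_le_mul_of_nonneg_left h3 hδ.le
    have h5 := mul_le_mul_of_nonneg_left h1 hN
    have h6 : ‖x + z - c + (f + g)‖ ^ 2 ≤ X ^ 2 + (4 * ε * r + 4 * ε ^ 2) := by
      have h7 : ‖x + z - c + (f + g)‖ ≤ X + 2 * ε := by
        linarith [norm_add_le (x + z - c) (f + g), norm_add_le f g]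
      have h8 : ‖x + z - c + (f + g)‖ ^ 2 ≤ (X + 2 * ε) ^ 2 := by gcongr
      have h9 : ε * X ≤ ε * r := by gcongr
      linarith
    have h7 := mul_le_mul_of_nonneg_left h6 (by positivity : 0 ≤ M * δ)
    have hψs := mul_nonneg hδ.le (hψ.nonneg s ⟨hs0.le, by linarith⟩)
    have hNs : 0 ≤ N * s := by positivity
    have hMX : 0 ≤ M * δ * X ^ 2 := by positivity
    rw [hbar]
    linarith
  have hgain : M * (36 * r + 20) * ε + 4 / α * (4 * M + 1) * ε ^ 2 ≤ jumpConst α r * ε := by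
    have h1 : 4 / α * (4 * M + 1) * ε ^ 2 ≤ 4 / α * (4 * M + 1) * ε := by
      have : ε ^ 2 ≤ ε := by nlinarith
      gcongr
    have : jumpConst α r = M * (36 * r + 20) + 4 / α * (4 * M + 1) := rfl
    rw [this]
    linarith
  have hMε2 : M * ε ^ 2 ≤ M * ε := by
    have : ε ^ 2 ≤ ε := by nlinarith
    gcongr
  have hMr0 : 0 ≤ M * r * ε := by positivity
  have hMε0 : 0 ≤ M * ε := by positivity
  have hαM : 0 ≤ 4 / α * (4 * M + 1) * ε ^ 2 := by positivity
  have hover0 : 0 ≤ δ * (jumpConst α r * ε - M * (4 * ε * r + 4 * ε ^ 2)) :=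
    mul_nonneg hδ.le (by linarith)
  have htugint := hu.intervalIntegrable_tugDiff hε hxΩ hzΩ
  have hsub := hu.sub_eq hε hxΩ hzΩ
  have hcoef : ∀ Y : ℝ, α / (2 * ε) * (ε * Y) = α * (Y / 2) := fun Y => by field_simp
  have hFS : α * (F + S) + β * (F + S) = F + S := by rw [← add_mul, hαβ, one_mul]
  have hα1 : α ≤ 1 := by linarith
  have hβ1 : β ≤ 1 := by linarith
  by_cases hεs : ε ≤ s
  · -- the points are apart: reflection coupling
    have htug : ∫ t in (0 : ℝ)..ε, tugDiff u x z t ≤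
        (ε - 0) * (2 * (F + S) + 2 * (M * δ * ε ^ 2 * (32 * (X / s) + 8))) := by
      refine intervalIntegral_le_of_le_const hε.le htugint fun t ht => ?_
      rcases le_or_gt (2 * t) s with hts | hts
      · refine (hcone t ht hts).trans ?_
        have : t ^ 2 ≤ ε ^ 2 := pow_le_pow_left₀ ht.1.le ht.2 2
        gcongr
      · refine (hover t ht hts).trans ?_
        have : 0 ≤ 2 * (M * δ * ε ^ 2 * (32 * (X / s) + 8)) := by positivity
        linarith
    have hnoise := integral_sub_le_of_reflection (T := T) (γ := 4 * (δ * κ s)) hε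
      (by positivity) R he hintx hintz hsync ?_
    · have h1 := mul_le_mul_of_nonneg_left htug (by positivity : 0 ≤ α / (2 * ε))
      rw [sub_zero, hcoef] at h1
      have h2 : V⁻¹ * ((∫ h in ball 0 ε, u (x + h)) - ∫ h in ball 0 ε, u (z + h)) ≤
          T - 4 * (δ * κ s) * (ε ^ 2 / 64 * (1 / 8) ^ n) := by
        rw [inv_mul_le_iff₀ hVpos, mul_comm V]
        exact hnoise
      have h3 := mul_le_mul_of_nonneg_left h2 hβ.le
      have h4 := mul_le_mul_of_nonneg_left (hκ hεs hsr hgt) (by positivity : 0 ≤ δ * ε ^ 2)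
      have h5 : α * (M * δ * ε ^ 2 * (32 * (X / s) + 8)) ≤
          1 * (M * δ * ε ^ 2 * (32 * (X / s) + 8)) := by gcongr
      have h6 : β * (4 * (M * δ * ε ^ 2)) ≤ 1 * (4 * (M * δ * ε ^ 2)) := by gcongr
      rw [hT] at h3
      linarith
    · intro h hh
      have hh' : ‖h‖ < ε / 2 := by simpa using hh
      have hw : |⟪e, h⟫| ≤ ‖h‖ := by simpa [he] using abs_real_inner_le_norm e h
      have hw' := abs_le.1 hw
      have h1 := hsym h (R h) (by linarith) (by rw [R.norm_map]; linarith)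
      rw [hR, hd, ← add_smul, ← sub_smul, norm_smul, norm_smul, he, mul_one, mul_one,
        Real.norm_of_nonneg (by linarith), Real.norm_of_nonneg (by linarith)] at h1
      have h2 := mul_le_mul_of_nonneg_left
        (hpar (s + 2 * ⟪e, h⟫) ⟨by linarith, by linarith⟩) hδ.le
      have h3 := mul_le_mul_of_nonneg_left
        (hpar (s - 2 * ⟪e, h⟫) ⟨by linarith, by linarith⟩) hδ.le
      rw [map_neg]
      linarith
  · -- the points are close: parallel coupling, and the overlap of the balls
    push Not at hεs
    have hmid : (0 : ℝ) ≤ ε / 2 := by positivity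
    have hint1 : IntervalIntegrable (tugDiff u x z) volume 0 (ε / 2) :=
      htugint.mono_set (by
        rw [uIcc_of_le hmid, uIcc_of_le hε.le]; exact Icc_subset_Icc_right (by linarith))
    have hint2 : IntervalIntegrable (tugDiff u x z) volume (ε / 2) ε :=
      htugint.mono_set (by
        rw [uIcc_of_le (by linarith), uIcc_of_le hε.le]; exact Icc_subset_Icc_left hmid)
    have htug1 : ∫ t in (0 : ℝ)..(ε / 2), tugDiff u x z t ≤
        (ε / 2 - 0) * (2 * (F + S) + 2 * (M * δ * (16 * ε * r + 8 * ε ^ 2))) := by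
      refine intervalIntegral_le_of_le_const hmid hint1 fun t ht => ?_
      have ht' : t ∈ Ioc 0 ε := ⟨ht.1, by linarith [ht.2]⟩
      rcases le_or_gt (2 * t) s with hts | hts
      · refine (hcone t ht' hts).trans ?_
        have ht0 := ht.1
        have h1 : t ^ 2 * (X / s) ≤ ε * r / 2 := by
          rw [← mul_div_assoc, div_le_iff₀ hs0]
          have h2 : t ^ 2 * X ≤ t * (s / 2) * X := by
            rw [sq]; gcongr; linarith
          have h3 : t * (s / 2) * X ≤ ε * (s / 2) * r := by
            gcongr; exact ht'.2
          linarith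
        have h2 : t ^ 2 ≤ ε ^ 2 := pow_le_pow_left₀ ht.1.le ht'.2 2
        have h3 : t ^ 2 * (32 * (X / s) + 8) ≤ 16 * ε * r + 8 * ε ^ 2 := by linarith
        have h4 := mul_le_mul_of_nonneg_left h3 (by positivity : 0 ≤ M * δ)
        linarith
      · refine (hover t ht' hts).trans ?_
        have : 0 ≤ 2 * (M * δ * (16 * ε * r + 8 * ε ^ 2)) := by positivity
        linarith
    have htug2 : ∫ t in (ε / 2)..ε, tugDiff u x z t ≤ (ε - ε / 2) * (2 * (F + S) -
        δ * (jumpConst α r * ε - M * (4 * ε * r + 4 * ε ^ 2))) := by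
      refine intervalIntegral_le_of_le_const (by linarith) hint2 fun t ht => ?_
      exact hover t ⟨by linarith [ht.1], ht.2⟩ (by linarith [ht.1])
    have hnoise : (∫ h in ball 0 ε, u (x + h)) - ∫ h in ball 0 ε, u (z + h) ≤ T * V := by
      rw [← integral_sub hintx hintz]
      refine (setIntegral_le_of_even_part measurableSet_ball (by simp) (hintx.sub hintz)
        (integrableOn_const (C := T) measure_ball_lt_top.ne) hsync).trans_eq ?_
      rw [setIntegral_const, smul_eq_mul, mul_comm]
    have h2 : V⁻¹ * ((∫ h in ball 0 ε, u (x + h)) - ∫ h in ball 0 ε, u (z + h)) ≤ T := by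
      rw [inv_mul_le_iff₀ hVpos, mul_comm V]
      exact hnoise
    have h3 := mul_le_mul_of_nonneg_left h2 hβ.le
    have h6 : β * (4 * (M * δ * ε ^ 2)) ≤ 1 * (4 * (M * δ * ε ^ 2)) := by gcongr
    have htug : ∫ t in (0 : ℝ)..ε, tugDiff u x z t ≤ ε * (2 * (F + S) +
        (M * δ * (16 * ε * r + 8 * ε ^ 2)) -
          δ * (jumpConst α r * ε - M * (4 * ε * r + 4 * ε ^ 2)) / 2) := by
      rw [← intervalIntegral.integral_add_adjacent_intervals hint1 hint2]
      linarith
    have h1 := mul_le_mul_of_nonneg_left htug (by positivity : 0 ≤ α / (2 * ε))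
    rw [hcoef] at h1
    have hbal : (M * δ * (16 * ε * r + 8 * ε ^ 2)) -
          δ * (jumpConst α r * ε - M * (4 * ε * r + 4 * ε ^ 2)) / 2 ≤
        -(2 / α * (4 * M + 1) * ε ^ 2 * δ) := by
      have e1 : 4 / α * (4 * M + 1) * ε ^ 2 = 2 * (2 / α * (4 * M + 1) * ε ^ 2) := by ring
      have h7 : M * (16 * ε * r + 8 * ε ^ 2) -
          (jumpConst α r * ε - M * (4 * ε * r + 4 * ε ^ 2)) / 2 ≤
          -(2 / α * (4 * M + 1) * ε ^ 2) := by linarith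
      have h8 := mul_le_mul_of_nonneg_left h7 hδ.le
      linarith
    have hbal' := mul_le_mul_of_nonneg_left hbal hα.le
    have e2 : α * -(2 / α * (4 * M + 1) * ε ^ 2 * δ) = -(2 * (4 * M + 1) * ε ^ 2 * δ) := by
      field_simp
    rw [e2] at hbal'
    rw [hT] at h3
    linarith

/-- Comparison with the barrier. -/
lemma IsDPPSolution.sub_le_of_profile (hu : IsDPPSolution Ω W ε α β u) (hε : 0 < ε) (hε1 : ε < 1)
    (hα : 0 < α) (hβ : 0 < β) (hαβ : α + β = 1) {r δ N B : ℝ} (hεr : ε < r) (hδ : 0 < δ)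
    (hN : 0 ≤ N) (hΩW : Ω ⊆ W) (hplane : ∀ x ∈ W, ∀ z ∈ W, u x - u z ≤ N * ‖x - z‖ + 2 * δ)
    {x z : EuclideanSpace ℝ (Fin n)} (hs0 : 0 < ‖x - z‖) (hsr : ‖x - z‖ < r)
    (hc : ball ((1 / 2 : ℝ) • (x + z)) r ⊆ Ω) {ψ m κ : ℝ → ℝ}
    (hψ : IsConcaveProfile r ε B ψ m κ)
    (hκ : ∀ a b, ‖a + b - (x + z)‖ < r → ε ≤ ‖a - b‖ → ‖a - b‖ < r →
      N * (‖a - b‖ + 2 * ε) + 2 / r ^ 2 * δ * ‖a + b - (x + z)‖ ^ 2 < u a - u b →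
      2 / r ^ 2 * (32 * (‖a + b - (x + z)‖ / ‖a - b‖) + 12) + 1 ≤
        β * ((1 / 8) ^ n / 16) * κ ‖a - b‖) :
    u x - u z ≤ N * (‖x - z‖ + 2 * ε) + δ * (ψ ‖x - z‖ + B + jumpConst α r * ε) := by
  have hr : 0 < r := hε.trans hεr
  have hJ : 0 < jumpConst α r := jumpConst_pos hα hr
  have hB := hψ.increment_nonneg
  obtain ⟨K, hK⟩ := hu.bounded
  set L := 2 * N * ε + δ * B + δ * jumpConst α r * ε with hL
  have hL0 : 0 ≤ L := by positivity
  have hδε : 0 < δ * ε ^ 2 := by positivity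
  have key : ∀ k : ℕ, ∀ a b, ‖a + b - (x + z)‖ < r → 0 < ‖a - b‖ → ‖a - b‖ < r →
      u a - u b ≤ pairBarrier N δ (2 / r ^ 2) L ψ (x + z) a b +
        max 0 (2 * K - k * (δ * ε ^ 2)) := by
    intro k
    induction k with
    | zero =>
      intro a b hab h0 hr'
      have haΩ : a ∈ Ω := by
        apply hc
        rw [mem_ball, dist_eq_norm, show a - (1 / 2 : ℝ) • (x + z) =
          (1 / 2 : ℝ) • ((a + b - (x + z)) + (a - b)) by module, norm_smul]
        have := norm_add_le (a + b - (x + z)) (a - b)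
        norm_num
        linarith
      have hbΩ : b ∈ Ω := by
        apply hc
        rw [mem_ball, dist_eq_norm, show b - (1 / 2 : ℝ) • (x + z) =
          (1 / 2 : ℝ) • ((a + b - (x + z)) - (a - b)) by module, norm_smul]
        have := norm_sub_le (a + b - (x + z)) (a - b)
        norm_num
        linarith
      have h1 := (abs_le.1 (hK a (hΩW haΩ))).2
      have h2 := (abs_le.1 (hK b (hΩW hbΩ))).1
      have h3 := mul_nonneg hδ.le (hψ.nonneg ‖a - b‖ ⟨norm_nonneg _, by linarith⟩)
      have h4 : 0 ≤ N * ‖a - b‖ := by positivity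
      have h5 : 0 ≤ 2 / r ^ 2 * δ * ‖a + b - (x + z)‖ ^ 2 := by positivity
      have h6 := le_max_right 0 (2 * K - (0 : ℕ) * (δ * ε ^ 2))
      norm_num only [Nat.cast_zero, zero_mul, sub_zero] at h6 ⊢
      unfold pairBarrier
      linarith
    | succ k ih =>
      intro a b hab h0 hr'
      refine (hu.barrier_improvement hε hε1 hα hβ hαβ hεr hδ hN hplane hc hψ hL ?_
        (le_max_left _ _) ih a b hab h0 hr').trans ?_
      · intro a b h1 h2 h3 h4
        refine hκ a b h1 h2 h3 (lt_of_le_of_lt ?_ h4)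
        have h5 := mul_nonneg hδ.le (hψ.nonneg ‖a - b‖ ⟨norm_nonneg _, by linarith⟩)
        have h6 : 0 ≤ δ * B + δ * jumpConst α r * ε := by positivity
        unfold pairBarrier
        linarith
      · refine add_le_add_right (max_le (le_max_left _ _) ?_) _
        push_cast
        rcases max_cases 0 (2 * K - k * (δ * ε ^ 2)) with ⟨h1, -⟩ | ⟨h1, -⟩
        · rw [h1]
          exact le_max_of_le_left (by linarith)
        · rw [h1]
          exact le_max_of_le_right (by linarith)
  obtain ⟨k, hk⟩ := exists_nat_gt (2 * K / (δ * ε ^ 2))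
  rw [div_lt_iff₀ hδε] at hk
  have h1 := key k x z (by simpa using hr) hs0 hsr
  rw [max_eq_left (by linarith)] at h1
  unfold pairBarrier at h1
  rw [sub_self, norm_zero] at h1
  linarith

end Barrier

section Profiles

lemma isConcaveProfile_sqrt {r ε H : ℝ} (hε : 0 ≤ ε) (hH : 0 ≤ H)
    (hH2 : 2 ≤ H * √r) :
    IsConcaveProfile r ε (2 * H * √ε) (fun s => H * √s) (fun s => H / (2 * √s))
      (fun s => H / (16 * (s * √s))) where
  nonneg y _ := by positivity
  two_le y hy := hH2.trans (by have := hy.1; gcongr)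
  slope_nonneg s _ := by positivity
  curv_nonneg s hs := by have := hs.1; positivity
  le_tangent s hs y hy := by
    have hb : 0 < √s := Real.sqrt_pos.2 hs.1
    have hs2 := Real.sq_sqrt hs.1.le
    have hy2 := Real.sq_sqrt hy.1
    have key : H * √s + H / (2 * √s) * (y - s) - H * √y = H / (2 * √s) * (√y - √s) ^ 2 := by
      rw [← hs2, ← hy2, Real.sqrt_sq hb.le, Real.sqrt_sq (Real.sqrt_nonneg y)]
      field_simp
      ring
    have : 0 ≤ H / (2 * √s) * (√y - √s) ^ 2 := by positivity
    linarith
  le_parabola s hs y hy := by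
    have hb : 0 < √s := Real.sqrt_pos.2 hs.1
    have hs2 := Real.sq_sqrt hs.1.le
    have hy2 := Real.sq_sqrt hy.1
    have key : H * √s + H / (2 * √s) * (y - s) - H / (16 * (s * √s)) * (y - s) ^ 2 - H * √y =
        H / (16 * (√s) ^ 3) * ((√y - √s) ^ 2 * (8 * (√s) ^ 2 - (√y + √s) ^ 2)) := by
      rw [← hs2, ← hy2, Real.sqrt_sq hb.le, Real.sqrt_sq (Real.sqrt_nonneg y)]
      field_simp
      ring
    have h1 : 0 ≤ 8 * (√s) ^ 2 - (√y + √s) ^ 2 := by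
      have := hy.2
      nlinarith [sq_nonneg (√y - √s)]
    have : 0 ≤ H / (16 * (√s) ^ 3) * ((√y - √s) ^ 2 * (8 * (√s) ^ 2 - (√y + √s) ^ 2)) := by
      positivity
    linarith
  increment_nonneg := by positivity
  increment_le s hs y hy := by
    have h1 : √y ≤ √s + 2 * √ε := by
      rw [Real.sqrt_le_left (by positivity)]
      have := Real.sq_sqrt hs.1.le
      have := Real.sq_sqrt hε
      have : 0 ≤ √s * √ε := by positivity
      nlinarith [hy.2]
    have := mul_le_mul_of_nonneg_left h1 hH
    linarith

lemma isConcaveProfile_linear_sub {r ε C K : ℝ} (hr : 0 < r) (hε : 0 ≤ ε) (hK : 0 ≤ K)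
    (hC : 2 * K * √√(3 * r) + 2 / r ≤ C) :
    IsConcaveProfile r ε (2 * C * ε) (fun s => C * s - K * (s * √√s))
      (fun s => C - 5 / 4 * K * √√s) (fun s => K / (60 * √√s ^ 3)) := by
  have hq : ∀ y ∈ Icc 0 (3 * r), K * √√y ≤ K * √√(3 * r) := fun y hy => by
    have := hy.2
    gcongr
  have hK3 : 0 ≤ K * √√(3 * r) := by positivity
  have hr2 : 0 < 2 / r := by positivity
  have hfour : ∀ y : ℝ, 0 ≤ y → √√y ^ 4 = y := fun y hy => by
    rw [show √√y ^ 4 = (√√y ^ 2) ^ 2 by ring, Real.sq_sqrt (Real.sqrt_nonneg _), Real.sq_sqrt hy]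
  have hlow : ∀ y ∈ Icc 0 (3 * r), 2 / r * y ≤ C * y - K * (y * √√y) := fun y hy => by
    have h1 := mul_le_mul_of_nonneg_right (by linarith [hq y hy] : 2 / r ≤ C - K * √√y) hy.1
    linarith
  have hslope : ∀ s ∈ Ioo 0 r, 0 ≤ C - 5 / 4 * K * √√s := fun s hs => by
    linarith [hq s ⟨hs.1.le, by linarith [hs.2]⟩]
  have htan : ∀ s ∈ Ioo 0 r, ∀ y, 0 ≤ y → C * y - K * (y * √√y) ≤
      C * s - K * (s * √√s) + (C - 5 / 4 * K * √√s) * (y - s) := fun s hs y hy => by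
    have hs4 := hfour s hs.1.le
    have hy4 := hfour y hy
    set a := √√y with ha
    set b := √√s with hb
    have ha0 : 0 ≤ a := Real.sqrt_nonneg _
    have hb0 : 0 ≤ b := Real.sqrt_nonneg _
    have : 0 ≤ K / 4 * ((a - b) ^ 2 * (4 * a ^ 3 + 3 * a ^ 2 * b + 2 * a * b ^ 2 + b ^ 3)) := by
      positivity
    rw [← hs4, ← hy4]
    linarith
  refine ⟨?_, ?_, hslope, ?_, fun s hs y hy => htan s hs y hy.1, ?_, ?_, ?_⟩
  · intro y hy
    have := hy.1
    exact le_trans (by positivity) (hlow y hy)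
  · intro y hy
    refine le_trans ?_ (hlow y ⟨hr.le.trans hy.1, hy.2⟩)
    rw [div_mul_eq_mul_div, le_div_iff₀ hr]
    linarith [hy.1]
  · intro s hs
    positivity
  · intro s hs y hy
    have hs4 := hfour s hs.1.le
    have hy4 := hfour y hy.1
    have hab4 : √√y ^ 4 ≤ 2 * √√s ^ 4 := by rw [hs4, hy4]; exact hy.2
    have hb0 : 0 < √√s := Real.sqrt_pos.2 (Real.sqrt_pos.2 hs.1)
    have ha0 : 0 ≤ √√y := Real.sqrt_nonneg _
    set a := √√y with ha
    set b := √√s with hb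
    have hab : a ≤ 2 * b := by
      refine le_of_pow_le_pow_left₀ (n := 4) (by norm_num) (by positivity) ?_
      have : 0 < b ^ 4 := by positivity
      nlinarith
    rw [← hs4, ← hy4]
    have h15 : a ^ 3 + a ^ 2 * b + a * b ^ 2 + b ^ 3 ≤ 15 * b ^ 3 := by
      have h1 : a ^ 3 ≤ (2 * b) ^ 3 := by gcongr
      have h2 : a ^ 2 * b ≤ (2 * b) ^ 2 * b := by gcongr
      have h3 : a * b ^ 2 ≤ (2 * b) * b ^ 2 := by gcongr
      linarith
    have key : C * b ^ 4 - K * (b ^ 4 * b) + (C - 5 / 4 * K * b) * (a ^ 4 - b ^ 4) -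
        K / (60 * b ^ 3) * (a ^ 4 - b ^ 4) ^ 2 - (C * a ^ 4 - K * (a ^ 4 * a)) =
        K / (60 * b ^ 3) * (a - b) ^ 2 * (15 * b ^ 3 * (4 * a ^ 3 + 3 * a ^ 2 * b + 2 * a * b ^ 2 +
          b ^ 3) - (a ^ 3 + a ^ 2 * b + a * b ^ 2 + b ^ 3) ^ 2) := by
      field_simp
      ring
    have h2 : 0 ≤ 15 * b ^ 3 * (4 * a ^ 3 + 3 * a ^ 2 * b + 2 * a * b ^ 2 +
          b ^ 3) - (a ^ 3 + a ^ 2 * b + a * b ^ 2 + b ^ 3) ^ 2 := by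
      have h3 := mul_le_mul_of_nonneg_right h15
        (by positivity : 0 ≤ a ^ 3 + a ^ 2 * b + a * b ^ 2 + b ^ 3)
      have h4 : 0 ≤ 15 * b ^ 3 * (3 * a ^ 3 + 2 * a ^ 2 * b + a * b ^ 2) := by positivity
      linarith
    have h3 : 0 ≤ K / (60 * b ^ 3) * (a - b) ^ 2 := by positivity
    linarith [mul_nonneg h3 h2]
  · have : 0 ≤ C := by linarith
    positivity
  · intro s hs y hy
    refine (htan s hs y (hs.1.le.trans hy.1)).trans ?_
    have h1 : (C - 5 / 4 * K * √√s) * (y - s) ≤ C * (2 * ε) := by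
      have h2 : 0 ≤ K * √√s := by positivity
      exact mul_le_mul (by linarith) (by linarith [hy.2]) (by linarith [hy.1]) (by linarith)
    linarith

end Profiles

section Estimates

variable {n : ℕ} {Ω W : Set (EuclideanSpace ℝ (Fin n))} {ε α β : ℝ}
  {u : EuclideanSpace ℝ (Fin n) → ℝ}

/-- The interior Hölder estimate with exponent `1/2`. -/
lemma IsDPPSolution.sub_le_sqrt (hu : IsDPPSolution Ω W ε α β u) (hε : 0 < ε) (hε1 : ε < 1)
    (hα : 0 < α) (hβ : 0 < β) (hαβ : α + β = 1) {r δ N H : ℝ} (hεr : ε < r) (hδ : 0 < δ)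
    (hN : 0 ≤ N) (hΩW : Ω ⊆ W) (hplane : ∀ x ∈ W, ∀ z ∈ W, u x - u z ≤ N * ‖x - z‖ + 2 * δ)
    (hH : 0 ≤ H) (hH2 : 2 ≤ H * √r)
    (hHκ : (44 * (2 / r ^ 2) + 1) * (r * √r) ≤ β * ((1 / 8) ^ n / 16) * (H / 16))
    {x z : EuclideanSpace ℝ (Fin n)} (hs0 : 0 < ‖x - z‖) (hsr : ‖x - z‖ < r)
    (hc : ball ((1 / 2 : ℝ) • (x + z)) r ⊆ Ω) :
    u x - u z ≤ N * (‖x - z‖ + 2 * ε) +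
      δ * (H * √‖x - z‖ + 2 * H * √ε + jumpConst α r * ε) := by
  have hr : 0 < r := hε.trans hεr
  refine hu.sub_le_of_profile hε hε1 hα hβ hαβ hεr hδ hN hΩW hplane hs0 hsr hc
    (isConcaveProfile_sqrt hε.le hH hH2) fun a b hX hεs hs _ => ?_
  have hs0 : 0 < ‖a - b‖ := hε.trans_le hεs
  set s := ‖a - b‖
  set X := ‖a + b - (x + z)‖
  have hX0 : 0 ≤ X := norm_nonneg _
  have hq : 0 < √s := Real.sqrt_pos.2 hs0
  rw [show β * ((1 / 8) ^ n / 16) * (H / (16 * (s * √s))) =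
    β * ((1 / 8) ^ n / 16) * (H / 16) / (s * √s) by field_simp, le_div_iff₀ (by positivity)]
  refine le_trans ?_ hHκ
  have e1 : (2 / r ^ 2 * (32 * (X / s) + 12) + 1) * (s * √s) =
      2 / r ^ 2 * (32 * (X * √s) + 12 * (s * √s)) + s * √s := by
    field_simp
  have h1 : X * √s ≤ r * √r := by gcongr
  have h2 : s * √s ≤ r * √r := by gcongr
  have h3 : 2 / r ^ 2 * (32 * (X * √s) + 12 * (s * √s)) ≤
      2 / r ^ 2 * (32 * (r * √r) + 12 * (r * √r)) := by gcongr
  rw [e1]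
  linarith

/-- The interior Lipschitz estimate, up to an error of order `ε`. -/
lemma IsDPPSolution.sub_le_linear (hu : IsDPPSolution Ω W ε α β u) (hε : 0 < ε) (hε1 : ε < 1)
    (hα : 0 < α) (hβ : 0 < β) (hαβ : α + β = 1) {r δ N H K C : ℝ} (hεr : ε < r) (hδ : 0 < δ)
    (hN : 0 ≤ N) (hΩW : Ω ⊆ W) (hplane : ∀ x ∈ W, ∀ z ∈ W, u x - u z ≤ N * ‖x - z‖ + 2 * δ)
    (hH : 0 ≤ H) (hH2 : 2 ≤ H * √r)
    (hHκ : (44 * (2 / r ^ 2) + 1) * (r * √r) ≤ β * ((1 / 8) ^ n / 16) * (H / 16))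
    (hK : 0 ≤ K) (hKκ : 32 * (2 / r ^ 2) * √((3 * H + jumpConst α r) / (2 / r ^ 2)) +
      (12 * (2 / r ^ 2) + 1) * √√r ^ 3 ≤ β * ((1 / 8) ^ n / 16) * (K / 60))
    (hC : 2 * K * √√(3 * r) + 2 / r ≤ C)
    {x z : EuclideanSpace ℝ (Fin n)} (hs0 : 0 < ‖x - z‖) (hsr : ‖x - z‖ < r)
    (hc : ball ((1 / 2 : ℝ) • (x + z)) (2 * r) ⊆ Ω) :
    u x - u z ≤ N * (‖x - z‖ + 2 * ε) +
      δ * (C * ‖x - z‖ + 2 * C * ε + jumpConst α r * ε) := by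
  have hr : 0 < r := hε.trans hεr
  have hJ := jumpConst_pos hα hr
  refine (hu.sub_le_of_profile hε hε1 hα hβ hαβ hεr hδ hN hΩW hplane hs0 hsr
    ((ball_subset_ball (by linarith)).trans hc)
    (isConcaveProfile_linear_sub hr hε.le hK hC) fun a b hX hεs hs hgt => ?_).trans ?_
  · have hs0 : 0 < ‖a - b‖ := hε.trans_le hεs
    have hmid : ball ((1 / 2 : ℝ) • (a + b)) r ⊆ Ω := by
      refine (ball_subset_ball' ?_).trans hc
      rw [dist_eq_norm, ← smul_sub, norm_smul]
      norm_num
      linarith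
    have hhol := hu.sub_le_sqrt hε hε1 hα hβ hαβ hεr hδ hN hΩW hplane hH hH2 hHκ hs0 hs hmid
    set M := 2 / r ^ 2
    have hM : 0 < M := by positivity
    set s := ‖a - b‖
    set X := ‖a + b - (x + z)‖
    set J := jumpConst α r
    have hsqε : √ε ≤ √s := Real.sqrt_le_sqrt hεs
    have hεs' : ε ≤ √s := by
      refine le_trans ?_ hsqε
      rw [Real.le_sqrt hε.le hε.le]
      nlinarith
    have hX2 : X ^ 2 ≤ (3 * H + J) / M * √s := by
      have h1 : H * √ε ≤ H * √s := by gcongr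
      have h2 : J * ε ≤ J * √s := by gcongr
      have h3 : δ * (M * X ^ 2) ≤ δ * ((3 * H + J) * √s) := by
        have := mul_le_mul_of_nonneg_left
          (by linarith : H * √s + 2 * H * √ε + J * ε ≤ (3 * H + J) * √s) hδ.le
        linarith
      rw [div_mul_eq_mul_div, le_div_iff₀ hM, mul_comm]
      exact le_of_mul_le_mul_left h3 hδ
    have hX' : X ≤ √((3 * H + J) / M) * √√s := by
      rw [← Real.sqrt_mul (by positivity)]
      exact Real.le_sqrt_of_sq_le hX2
    have hq : 0 < √√s := Real.sqrt_pos.2 (Real.sqrt_pos.2 hs0)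
    have hs4 : s = √√s ^ 3 * √√s := by
      rw [show √√s ^ 3 * √√s = (√√s ^ 2) ^ 2 by ring, Real.sq_sqrt (Real.sqrt_nonneg _),
        Real.sq_sqrt hs0.le]
    have hXs : X / s * √√s ^ 3 ≤ √((3 * H + J) / M) := by
      rw [div_mul_eq_mul_div, div_le_iff₀ hs0]
      calc X * √√s ^ 3 ≤ √((3 * H + J) / M) * √√s * √√s ^ 3 := by gcongr
        _ = √((3 * H + J) / M) * (√√s ^ 3 * √√s) := by ring
        _ = _ := by rw [← hs4]
    rw [show β * ((1 / 8) ^ n / 16) * (K / (60 * √√s ^ 3)) =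
      β * ((1 / 8) ^ n / 16) * (K / 60) / √√s ^ 3 by field_simp, le_div_iff₀ (by positivity)]
    refine le_trans ?_ hKκ
    have h1 : (12 * M + 1) * √√s ^ 3 ≤ (12 * M + 1) * √√r ^ 3 := by gcongr
    have h2 := mul_le_mul_of_nonneg_left hXs (by positivity : 0 ≤ 32 * M)
    linarith
  · have h1 : 0 ≤ K * (‖x - z‖ * √√‖x - z‖) := by positivity
    gcongr
    linarith

end Estimates

lemma isBounded_union_strip {n : ℕ} [NeZero n] {Ω : Set (EuclideanSpace ℝ (Fin n))} {ε : ℝ}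
    (hne : Ω.Nonempty) (hb : Bornology.IsBounded Ω) :
    Bornology.IsBounded (Ω ∪ {y | y ∉ Ω ∧ infDist y (frontier Ω) ≤ ε}) := by
  have hfr : (frontier Ω).Nonempty := by
    rw [nonempty_frontier_iff]
    refine ⟨hne, fun h => NormedSpace.unbounded_univ ℝ (EuclideanSpace ℝ (Fin n)) (h ▸ hb)⟩
  have hfb : Bornology.IsBounded (frontier Ω) := hb.closure.subset frontier_subset_closure
  refine hb.union ((hfb.thickening (δ := ε + 1)).subset fun y hy => ?_)
  obtain ⟨w, hw, hd⟩ := (infDist_lt_iff hfr).1 (lt_of_le_of_lt hy.2 (lt_add_one ε))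
  exact mem_thickening_iff.2 ⟨w, hw, hd⟩

/-- **Improved Lipschitz estimate near a plane (Theorem 4.2).** For every `p > 2`, integer
`n ≥ 2` and `r > 0` there exists `C > 0` depending only on `p, n, r` such that: for
`ε ∈ (0,1)` with `ε < r`, `F` continuous on `Γ_ε` with `|F(x) − ν·x − b| ≤ δ` there, and
`u` a bounded Borel function on `Ω_ε` satisfying the DPP on `Ω` with `u = F` on `Γ_ε`,
for every `z₀` with `B_{6r}(z₀) ⊆ Ω` and all `x, y ∈ B_r(z₀)`:
`|u(x) − u(y)| ≤ (|ν| + Cδ)|x − y| + (5|ν| + Cδ)ε`. -/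
theorem improved_lipschitz_estimate (n : ℕ) (hn : 2 ≤ n) (p r : ℝ)
    (hp : 2 < p) (hr : 0 < r) :
    ∃ C : ℝ, 0 < C ∧
      ∀ (Ω : Set (EuclideanSpace ℝ (Fin n))),
        IsOpen Ω → IsConnected Ω → Bornology.IsBounded Ω →
      ∀ ε : ℝ, ε ∈ Set.Ioo (0 : ℝ) 1 → ε < r →
      ∀ (ν : EuclideanSpace ℝ (Fin n)) (b δ : ℝ), 0 < δ →
      ∀ F u : EuclideanSpace ℝ (Fin n) → ℝ,
        ContinuousOn F {x | x ∉ Ω ∧ Metric.infDist x (frontier Ω) ≤ ε} →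
        (∀ x ∈ {x | x ∉ Ω ∧ Metric.infDist x (frontier Ω) ≤ ε}, |F x - ⟪ν, x⟫ - b| ≤ δ) →
        Measurable u →
        (∃ M, ∀ x ∈ Ω ∪ {x | x ∉ Ω ∧ Metric.infDist x (frontier Ω) ≤ ε}, |u x| ≤ M) →
        (∀ x ∈ {x | x ∉ Ω ∧ Metric.infDist x (frontier Ω) ≤ ε}, u x = F x) →
        (∀ x ∈ Ω, u x =
          ((p - 2) / (n + p)) / (2 * ε) *
              (∫ t in (0 : ℝ)..ε, (sSup (u '' Metric.ball x t) + sInf (u '' Metric.ball x t)))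
            + ((n + 2) / (n + p)) * ⨍ z in Metric.ball x ε, u z) →
      ∀ z₀ : EuclideanSpace ℝ (Fin n), Metric.ball z₀ (6 * r) ⊆ Ω →
      ∀ x ∈ Metric.ball z₀ r, ∀ y ∈ Metric.ball z₀ r,
        |u x - u y| ≤ (‖ν‖ + C * δ) * dist x y + (5 * ‖ν‖ + C * δ) * ε := by
  have hn0 : 0 < (n : ℝ) := by positivity
  have hnp : 0 < (n : ℝ) + p := by linarith
  have : NeZero n := ⟨by omega⟩
  set α := (p - 2) / ((n : ℝ) + p) with hαdef
  set β := ((n : ℝ) + 2) / ((n : ℝ) + p) with hβdef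
  have hα : 0 < α := div_pos (by linarith) hnp
  have hβ : 0 < β := div_pos (by linarith) hnp
  have hαβ : α + β = 1 := by
    rw [hαdef, hβdef, ← add_div, div_eq_one_iff_eq hnp.ne']
    ring
  have hJ := jumpConst_pos hα hr
  have hq : 0 < √r := Real.sqrt_pos.2 hr
  have hβn : 0 < β * ((1 / 8) ^ n / 16) := by positivity
  obtain ⟨H, hH, hH2, hHκ⟩ : ∃ H : ℝ, 0 ≤ H ∧ 2 ≤ H * √r ∧
      (44 * (2 / r ^ 2) + 1) * (r * √r) ≤ β * ((1 / 8) ^ n / 16) * (H / 16) := by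
    set A := (44 * (2 / r ^ 2) + 1) * (r * √r)
    have hA : 0 ≤ A := by positivity
    refine ⟨max (2 / √r) (16 * A / (β * ((1 / 8) ^ n / 16))), ?_, ?_, ?_⟩
    · positivity
    · rw [← div_le_iff₀ hq]
      exact le_max_left _ _
    · rw [← div_le_iff₀' hβn, le_div_iff₀ (by norm_num), div_mul_eq_mul_div, mul_comm A]
      exact le_max_right _ _
  obtain ⟨K, hK, hKκ⟩ : ∃ K : ℝ, 0 ≤ K ∧
      32 * (2 / r ^ 2) * √((3 * H + jumpConst α r) / (2 / r ^ 2)) +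
        (12 * (2 / r ^ 2) + 1) * √√r ^ 3 ≤ β * ((1 / 8) ^ n / 16) * (K / 60) := by
    set A := 32 * (2 / r ^ 2) * √((3 * H + jumpConst α r) / (2 / r ^ 2)) +
        (12 * (2 / r ^ 2) + 1) * √√r ^ 3
    have hA : 0 ≤ A := by positivity
    refine ⟨60 * A / (β * ((1 / 8) ^ n / 16)), by positivity, le_of_eq ?_⟩
    field_simp
  obtain ⟨C, hC⟩ : ∃ C, 2 * K * √√(3 * r) + 2 / r ≤ C := ⟨_, le_rfl⟩
  have hr2 : 0 < 2 / r := by positivity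
  have hK3 : 0 ≤ 2 * K * √√(3 * r) := by positivity
  refine ⟨2 * C + jumpConst α r, by linarith, ?_⟩
  intro Ω _ hconn hbdd ε hε hεr ν b δ hδ F u _ hF hmeas hbound huF hDPP z₀ hz₀
  have hW := isBounded_union_strip (ε := ε) hconn.nonempty hbdd
  have hΩW : Ω ⊆ Ω ∪ {x | x ∉ Ω ∧ infDist x (frontier Ω) ≤ ε} := subset_union_left
  have hu : IsDPPSolution Ω (Ω ∪ {x | x ∉ Ω ∧ infDist x (frontier Ω) ≤ ε}) ε α β u :=
    ⟨hmeas, hbound, fun x hx => ball_subset_union_strip hx, hDPP⟩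
  have haff := hu.abs_sub_affine_le hε.1 hα hβ hαβ hW (v := ν) (b := b) (δ := δ) (by
    intro x hx hxΩ
    have hx' := hx.resolve_left hxΩ
    rw [huF x hx', ← sub_sub]
    exact hF x hx')
  have hplane : ∀ x ∈ Ω ∪ {x | x ∉ Ω ∧ infDist x (frontier Ω) ≤ ε},
      ∀ z ∈ Ω ∪ {x | x ∉ Ω ∧ infDist x (frontier Ω) ≤ ε},
      u x - u z ≤ ‖ν‖ * ‖x - z‖ + 2 * δ := by
    intro x hx z hz
    have h1 := (abs_le.1 (haff x hx)).2
    have h2 := (abs_le.1 (haff z hz)).1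
    have h3 := real_inner_le_norm ν (x - z)
    rw [inner_sub_right] at h3
    linarith
  have hν := norm_nonneg ν
  have hνε : 0 ≤ ‖ν‖ * ε := mul_nonneg hν hε.1.le
  have key : ∀ x ∈ ball z₀ r, ∀ y ∈ ball z₀ r, u x - u y ≤
      (‖ν‖ + (2 * C + jumpConst α r) * δ) * dist x y +
        (5 * ‖ν‖ + (2 * C + jumpConst α r) * δ) * ε := by
    intro x hx y hy
    have hε0 := hε.1
    have hC0 : 0 ≤ C := by linarith
    rw [dist_eq_norm]
    have hs := norm_nonneg (x - y)
    have hJδ : 0 ≤ jumpConst α r * δ * ‖x - y‖ := by positivity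
    have hCδ : 0 ≤ C * δ * ‖x - y‖ := by positivity
    have hCJ : 0 ≤ (2 * C + jumpConst α r) * δ * ε := by positivity
    rcases eq_or_ne x y with rfl | hne
    · rw [sub_self, sub_self, norm_zero, mul_zero, zero_add]
      linarith
    rcases le_or_gt r ‖x - y‖ with hfar | hnear
    · have hball : ball z₀ r ⊆ Ω := (ball_subset_ball (by linarith)).trans hz₀
      have h1 := hplane x (hΩW (hball hx)) y (hΩW (hball hy))
      have h2 : 2 ≤ C * ‖x - y‖ := by
        calc 2 = 2 / r * r := by field_simp
          _ ≤ C * ‖x - y‖ := mul_le_mul (by linarith) hfar hr.le hC0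
      have h3 := mul_le_mul_of_nonneg_right h2 hδ.le
      linarith
    · have h1 := hu.sub_le_linear hε.1 hε.2 hα hβ hαβ hεr hδ hν hΩW hplane hH hH2 hHκ hK hKκ hC
        (norm_pos_iff.2 (sub_ne_zero.2 hne)) hnear ?_
      · linarith
      · refine (ball_subset_ball' ?_).trans hz₀
        rw [mem_ball, dist_eq_norm] at hx hy
        rw [dist_eq_norm, show (1 / 2 : ℝ) • (x + y) - z₀ =
          (1 / 2 : ℝ) • ((x - z₀) + (y - z₀)) by module, norm_smul]
        have := norm_add_le (x - z₀) (y - z₀)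
        norm_num
        linarith
  intro x hx y hy
  rw [abs_sub_le_iff]
  exact ⟨key x hx y hy, by rw [dist_comm]; exact key y hy x hx⟩
end
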